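/- Let ϑ be an inner function. Then the set ϑ(𝒦_a) := {f ∈ 𝒦_a : f/ϑ ∈ 𝒦_a} equals the norm-closure in 𝒦_a of the set {ϑq : q an analytic polynomial} of analytic polynomial multiples of ϑ. -/

import Mathlib

open MeasureTheory Complex Filter Set Metric Polynomial

noncomputable section

/-- Normalized arc-length measure on the unit circle 𝕋, realized on the
parameter interval `(0, 2π]` via `θ ↦ e^{iθ}`. -/
def arcM : Measure ℝ :=
  (ENNReal.ofReal (2 * Real.pi))⁻¹ • (volume.restrict (Set.Ioc 0 (2 * Real.pi)))

/-- The open unit disc 𝔻 ⊆ ℂ. -/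
def uDisc : Set ℂ := Metric.ball 0 1

/-- The unit circle 𝕋 ⊆ ℂ. -/
def uCircle : Set ℂ := Metric.sphere 0 1

/-- The boundary point `e^{iθ}`. -/
def bpt (θ : ℝ) : ℂ := Complex.exp (θ * Complex.I)

/-- `f` is analytic on the open unit disc. -/
def AnalyticOnDisc (f : ℂ → ℂ) : Prop := DifferentiableOn ℂ f uDisc

/-- The integral mean `∫_𝕋 |f(rζ)|^p dm(ζ)`. -/
def hMean (p : ℝ) (f : ℂ → ℂ) (r : ℝ) : ℝ := ∫ θ, ‖f ((r : ℂ) * bpt θ)‖ ^ p ∂arcM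

/-- Membership in the Hardy space `H^p`, `0 < p < ∞`. -/
def MemHp (p : ℝ) (f : ℂ → ℂ) : Prop :=
  AnalyticOnDisc f ∧ BddAbove (hMean p f '' Set.Ioo 0 1)

/-- The Hardy space (quasi-)norm `‖f‖_{H^p} = (sup_{0<r<1} ∫_𝕋 |f(rζ)|^p dm)^{min(1,1/p)}`. -/
def hardyNorm (p : ℝ) (f : ℂ → ℂ) : ℝ :=
  sSup (hMean p f '' Set.Ioo 0 1) ^ min 1 (1 / p)

/-- Membership in `H^∞`: bounded analytic functions on 𝔻. -/
def MemHinf (f : ℂ → ℂ) : Prop :=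
  AnalyticOnDisc f ∧ ∃ C : ℝ, ∀ z ∈ uDisc, ‖f z‖ ≤ C

/-- `F` is (a representative of) the boundary function of `f` : radial limits a.e. on 𝕋. -/
def BoundaryFn (f : ℂ → ℂ) (F : ℝ → ℂ) : Prop :=
  ∀ᵐ θ ∂arcM, Filter.Tendsto (fun r : ℝ => f ((r : ℂ) * bpt θ))
    (nhdsWithin 1 (Set.Iio 1)) (nhds (F θ))

/-- `ϑ` is an inner function: bounded analytic with unimodular boundary values a.e. -/
def IsInner (ϑ : ℂ → ℂ) : Prop :=
  MemHinf ϑ ∧ ∃ Θ : ℝ → ℂ, BoundaryFn ϑ Θ ∧ ∀ᵐ θ ∂arcM, ‖Θ θ‖ = 1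

/-- The boundary function of `f` lies in `ϑ ⋅ conj(H^p_0)`. -/
def PseudoCont (p : ℝ) (ϑ f : ℂ → ℂ) : Prop :=
  ∃ F Θ G : ℝ → ℂ, ∃ g : ℂ → ℂ,
    BoundaryFn f F ∧ BoundaryFn ϑ Θ ∧ MemHp p g ∧ g 0 = 0 ∧ BoundaryFn g G ∧
    ∀ᵐ θ ∂arcM, F θ = Θ θ * (starRingEnd ℂ) (G θ)

/-- The boundary function of `f` lies in `ϑ ⋅ conj(H^∞_0)`. -/
def PseudoContInf (ϑ f : ℂ → ℂ) : Prop :=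
  ∃ F Θ G : ℝ → ℂ, ∃ g : ℂ → ℂ,
    BoundaryFn f F ∧ BoundaryFn ϑ Θ ∧ MemHinf g ∧ g 0 = 0 ∧ BoundaryFn g G ∧
    ∀ᵐ θ ∂arcM, F θ = Θ θ * (starRingEnd ℂ) (G θ)

/-- `f` extends analytically across the boundary set `S ⊆ 𝕋`. -/
def ExtendsAcross (f : ℂ → ℂ) (S : Set ℂ) : Prop :=
  ∃ U : Set ℂ, ∃ g : ℂ → ℂ, IsOpen U ∧ S ⊆ U ∧
    DifferentiableOn ℂ g (uDisc ∪ U) ∧ Set.EqOn g f uDisc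

/-- The boundary spectrum `σ(ϑ)`: the points of 𝕋 across which `ϑ` admits no
analytic continuation. -/
def bSpectrum (ϑ : ℂ → ℂ) : Set ℂ := {ζ | ζ ∈ uCircle ∧ ¬ ExtendsAcross ϑ {ζ}}

/-- Membership in the space `K^p_ϑ` of pseudocontinuable functions, `0 < p < ∞`:
`f ∈ H^p`, the boundary function of `f` lies in `ϑ ⋅ conj(H^p_0)`, and `f`
continues analytically across `𝕋 ∖ σ(ϑ)`. -/
def MemKp (p : ℝ) (ϑ f : ℂ → ℂ) : Prop :=
  MemHp p f ∧ PseudoCont p ϑ f ∧ ExtendsAcross f (uCircle \ bSpectrum ϑ)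

/-- Membership in `K^∞_ϑ = H^∞ ∩ ϑ ⋅ conj(H^∞_0)`. -/
def MemKinf (ϑ f : ℂ → ℂ) : Prop := MemHinf f ∧ PseudoContInf ϑ f

/-- The backward shift `f ↦ (f - f(0))/z`. -/
def bShift (f : ℂ → ℂ) : ℂ → ℂ :=
  fun z => if z = 0 then deriv f 0 else (f z - f 0) / z

/-- `X ∩ K^p_ϑ` is dense in `K^p_ϑ` in the `H^p` metric. -/
def DenseInKp (p : ℝ) (ϑ : ℂ → ℂ) (X : Set (ℂ → ℂ)) : Prop :=
  ∀ f : ℂ → ℂ, MemKp p ϑ f → ∀ ε > (0 : ℝ), ∃ g ∈ X, MemKp p ϑ g ∧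
    hardyNorm p (fun z => f z - g z) < ε

/-- `X ∩ K^∞_ϑ` is dense in `K^∞_ϑ` in the weak-star topology inherited from
`L^∞(𝕋, m) = (L¹(𝕋, m))^*`. -/
def WStarDenseKinf (ϑ : ℂ → ℂ) (X : Set (ℂ → ℂ)) : Prop :=
  ∀ f : ℂ → ℂ, MemKinf ϑ f → ∀ F : ℝ → ℂ, BoundaryFn f F →
    ∀ (n : ℕ) (h : Fin n → ℝ → ℂ), (∀ i, Integrable (h i) arcM) → ∀ ε > (0 : ℝ),
      ∃ g ∈ X, MemKinf ϑ g ∧ ∃ G : ℝ → ℂ, BoundaryFn g G ∧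
        ∀ i, ‖∫ θ, (F θ - G θ) * h i θ ∂arcM‖ < ε

/-- Membership in `𝒦_a = P₊(L¹)`: `f` is the Cauchy integral of some `h ∈ L¹(𝕋, m)`. -/
def MemKa (f : ℂ → ℂ) : Prop :=
  ∃ h : ℝ → ℂ, Integrable h arcM ∧
    ∀ z ∈ uDisc, f z = ∫ θ, h θ / (1 - (starRingEnd ℂ) (bpt θ) * z) ∂arcM

/-- The norm of `𝒦_a`: `‖f‖ = inf{‖h‖_{L¹} : f = P₊ h}`. -/
def kaNorm (f : ℂ → ℂ) : ℝ :=
  sInf {c : ℝ | ∃ h : ℝ → ℂ, Integrable h arcM ∧ (∫ θ, ‖h θ‖ ∂arcM) = c ∧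
    ∀ z ∈ uDisc, f z = ∫ θ, h θ / (1 - (starRingEnd ℂ) (bpt θ) * z) ∂arcM}

open scoped Topology

instance arcM_prob : IsProbabilityMeasure arcM := by
  constructor
  have hpi : (0:ℝ) < 2 * Real.pi := by positivity
  simp only [arcM, Measure.smul_apply, Measure.restrict_apply MeasurableSet.univ, Set.univ_inter,
    Real.volume_Ioc, sub_zero, smul_eq_mul]
  exact ENNReal.inv_mul_cancel (by simpa using Real.pi_pos) ENNReal.ofReal_ne_top

lemma bpt_eq_circleMap (θ : ℝ) : bpt θ = circleMap 0 1 θ := by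
  simp [bpt, circleMap]

lemma norm_bpt (θ : ℝ) : ‖bpt θ‖ = 1 := by
  simp [bpt, Complex.norm_exp]

lemma continuous_bpt : Continuous bpt := by
  unfold bpt; fun_prop

lemma bpt_ne_zero (θ : ℝ) : bpt θ ≠ 0 := Complex.exp_ne_zero _

lemma conj_bpt_mul (θ : ℝ) : (starRingEnd ℂ) (bpt θ) * bpt θ = 1 := by
  rw [mul_comm, Complex.mul_conj, Complex.normSq_eq_norm_sq, norm_bpt]; simp

lemma conj_bpt (θ : ℝ) : (starRingEnd ℂ) (bpt θ) = (bpt θ)⁻¹ :=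
  eq_inv_of_mul_eq_one_left (conj_bpt_mul θ)

lemma integral_arcM_eq {E : Type*} [NormedAddCommGroup E] [NormedSpace ℝ E] (F : ℂ → E) :
    ∫ θ, F (bpt θ) ∂arcM = Real.circleAverage F 0 1 := by
  have hpi : (0:ℝ) < 2 * Real.pi := by positivity
  rw [arcM, integral_smul_measure, Real.circleAverage_def,
    intervalIntegral.integral_of_le hpi.le, ENNReal.toReal_inv, ENNReal.toReal_ofReal hpi.le]
  simp [bpt_eq_circleMap]

/-- analytic in a neighbourhood of the closed disc -/
def Nice (F : ℂ → ℂ) : Prop := ∃ R : ℝ, 1 < R ∧ DifferentiableOn ℂ F (ball 0 R)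

lemma Nice.diffContOnCl {F : ℂ → ℂ} (h : Nice F) : DiffContOnCl ℂ F (ball 0 |1|) := by
  obtain ⟨R, hR, hF⟩ := h
  apply DifferentiableOn.diffContOnCl
  apply hF.mono
  refine closure_ball_subset_closedBall.trans (closedBall_subset_ball ?_)
  simpa using hR

lemma Nice.two {F G : ℂ → ℂ} (h : Nice F) (h' : Nice G) : ∃ R : ℝ, 1 < R ∧
    DifferentiableOn ℂ F (ball 0 R) ∧ DifferentiableOn ℂ G (ball 0 R) := by
  obtain ⟨R, hR, hF⟩ := h
  obtain ⟨S, hS, hG⟩ := h'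
  exact ⟨min R S, lt_min hR hS, hF.mono (ball_subset_ball (min_le_left _ _)),
    hG.mono (ball_subset_ball (min_le_right _ _))⟩

lemma Nice.mul {F G : ℂ → ℂ} (h : Nice F) (h' : Nice G) : Nice (fun z => F z * G z) := by
  obtain ⟨R, hR, hF, hG⟩ := h.two h'
  exact ⟨R, hR, hF.mul hG⟩

lemma Nice.add {F G : ℂ → ℂ} (h : Nice F) (h' : Nice G) : Nice (fun z => F z + G z) := by
  obtain ⟨R, hR, hF, hG⟩ := h.two h'
  exact ⟨R, hR, hF.add hG⟩

lemma Nice.sub {F G : ℂ → ℂ} (h : Nice F) (h' : Nice G) : Nice (fun z => F z - G z) := by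
  obtain ⟨R, hR, hF, hG⟩ := h.two h'
  exact ⟨R, hR, hF.sub hG⟩

lemma nice_const (c : ℂ) : Nice (fun _ => c) := ⟨2, by norm_num, differentiableOn_const c⟩

lemma nice_poly (q : Polynomial ℂ) : Nice (fun z => q.eval z) :=
  ⟨2, by norm_num, q.differentiable.differentiableOn⟩

lemma Nice.prod {ι : Type*} (s : Finset ι) {F : ι → ℂ → ℂ} (h : ∀ i ∈ s, Nice (F i)) :
    Nice (fun z => ∏ i ∈ s, F i z) := by
  classical
  induction s using Finset.induction_on with
  | empty => simpa using nice_const 1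
  | insert i s hi ih =>
    simp only [Finset.prod_insert hi]
    exact (h i (by simp)).mul (ih fun j hj => h j (by simp [hj]))

lemma Nice.sum {ι : Type*} (s : Finset ι) {F : ι → ℂ → ℂ} (h : ∀ i ∈ s, Nice (F i)) :
    Nice (fun z => ∑ i ∈ s, F i z) := by
  classical
  induction s using Finset.induction_on with
  | empty => simpa using nice_const 0
  | insert i s hi ih =>
    simp only [Finset.sum_insert hi]
    exact (h i (by simp)).add (ih fun j hj => h j (by simp [hj]))

lemma nice_dil {f : ℂ → ℂ} (hf : AnalyticOnDisc f) {r : ℝ} (hr : r ∈ Set.Ioo (0:ℝ) 1) :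
    Nice (fun z => f (r * z)) := by
  refine ⟨r⁻¹, (one_lt_inv₀ hr.1).2 hr.2, ?_⟩
  apply DifferentiableOn.comp (t := uDisc) hf (by fun_prop)
  intro z hz
  simp only [uDisc, mem_ball_zero_iff] at *
  rw [norm_mul, Complex.norm_real, Real.norm_of_nonneg hr.1.le]
  calc r * ‖z‖ < r * r⁻¹ := by gcongr; exact hr.1
    _ = 1 := mul_inv_cancel₀ hr.1.ne'

lemma Nice.continuous {F : ℂ → ℂ} (h : Nice F) : Continuous (fun θ => F (bpt θ)) := by
  obtain ⟨R, hR, hF⟩ := h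
  rw [← continuousOn_univ]
  refine hF.continuousOn.comp continuous_bpt.continuousOn fun θ _ => ?_
  simpa [norm_bpt] using hR

lemma Nice.bdd {F : ℂ → ℂ} (h : Nice F) : ∃ C : ℝ, ∀ z, ‖z‖ ≤ 1 → ‖F z‖ ≤ C := by
  obtain ⟨R, hR, hF⟩ := h
  have : ContinuousOn F (closedBall 0 1) := hF.continuousOn.mono (closedBall_subset_ball hR)
  obtain ⟨C, hC⟩ := (isCompact_closedBall (0:ℂ) 1).exists_bound_of_continuousOn this
  exact ⟨C, fun z hz => hC z (by simpa using hz)⟩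

lemma integrable_of_cont {E : Type*} [NormedAddCommGroup E] {F : ℝ → E} (h : Continuous F) :
    Integrable F arcM := by
  have h1 : IntegrableOn F (Ioc 0 (2 * Real.pi)) volume :=
    (h.integrableOn_Icc).mono_set Ioc_subset_Icc_self
  exact h1.integrable.smul_measure (by simpa using Real.pi_pos)

lemma Nice.integrable {F : ℂ → ℂ} (h : Nice F) : Integrable (fun θ => F (bpt θ)) arcM :=
  integrable_of_cont h.continuous

lemma Nice.mean {F : ℂ → ℂ} (h : Nice F) : ∫ θ, F (bpt θ) ∂arcM = F 0 := by
  rw [integral_arcM_eq, h.diffContOnCl.circleAverage]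

/-- The Cauchy integral. -/
def Pp (h : ℝ → ℂ) (z : ℂ) : ℂ := ∫ θ, h θ / (1 - (starRingEnd ℂ) (bpt θ) * z) ∂arcM

lemma den_lb (θ : ℝ) (z : ℂ) : 1 - ‖z‖ ≤ ‖1 - (starRingEnd ℂ) (bpt θ) * z‖ := by
  have := norm_sub_norm_le (1:ℂ) ((starRingEnd ℂ) (bpt θ) * z)
  simpa [norm_bpt] using this

lemma den_ne {z : ℂ} (hz : z ∈ uDisc) (θ : ℝ) : 1 - (starRingEnd ℂ) (bpt θ) * z ≠ 0 := by
  have := den_lb θ z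
  simp only [uDisc, mem_ball_zero_iff] at hz
  rw [← norm_pos_iff]; linarith

lemma Nice.cauchy {F : ℂ → ℂ} (h : Nice F) {z : ℂ} (hz : z ∈ uDisc) :
    Pp (fun θ => F (bpt θ)) z = F z := by
  have h1 := h.diffContOnCl.circleAverage_smul_div (w := z) (by simpa [uDisc] using hz)
  rw [← integral_arcM_eq] at h1
  rw [← h1, Pp]
  congr 1
  ext θ
  have hd := den_ne hz θ
  have hb := bpt_ne_zero θ
  rw [conj_bpt] at *
  have h2 : bpt θ - z ≠ 0 := by
    intro h3
    apply hd
    field_simp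
    simpa using h3
  simp only [sub_zero, smul_eq_mul]
  field_simp

lemma Nice.cauchy_conj {F : ℂ → ℂ} (h : Nice F) {z : ℂ} (hz : z ∈ uDisc) :
    Pp (fun θ => (starRingEnd ℂ) (F (bpt θ))) z = (starRingEnd ℂ) (F 0) := by
  have hz' : ‖z‖ < 1 := by simpa [uDisc] using hz
  have hN : Nice (fun w => F w * (1 - w * (starRingEnd ℂ) z)⁻¹) := by
    apply h.mul
    rcases eq_or_ne z 0 with rfl | hz0
    · simpa using nice_const 1
    refine ⟨‖z‖⁻¹, (one_lt_inv₀ (by simpa using hz0)).2 hz', ?_⟩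
    apply DifferentiableOn.inv (by fun_prop)
    intro w hw h0
    have h1 : w * (starRingEnd ℂ) z = 1 := by linear_combination -h0
    have h2 := congrArg norm h1
    simp only [norm_mul, RCLike.norm_conj, norm_one] at h2
    simp only [mem_ball_zero_iff] at hw
    have := mul_lt_mul_of_pos_right hw (norm_pos_iff.2 hz0)
    rw [inv_mul_cancel₀ (by simpa using hz0)] at this
    linarith
  have := hN.mean
  simp only [zero_mul, sub_zero, inv_one, mul_one] at this
  rw [← this, ← integral_conj, Pp]
  congr 1
  ext θ
  simp [div_eq_mul_inv]

lemma continuous_ker {z : ℂ} (hz : z ∈ uDisc) :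
    Continuous (fun θ => (1 - (starRingEnd ℂ) (bpt θ) * z)⁻¹) := by
  apply Continuous.inv₀
  · have := continuous_bpt
    fun_prop
  · exact den_ne hz

lemma norm_ker_le {z : ℂ} (hz : z ∈ uDisc) (θ : ℝ) :
    ‖(1 - (starRingEnd ℂ) (bpt θ) * z)⁻¹‖ ≤ (1 - ‖z‖)⁻¹ := by
  rw [norm_inv]
  have hz' : ‖z‖ < 1 := by simpa [uDisc] using hz
  exact inv_anti₀ (by linarith) (den_lb θ z)

lemma integrable_ker {h : ℝ → ℂ} (hh : Integrable h arcM) {z : ℂ} (hz : z ∈ uDisc) :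
    Integrable (fun θ => h θ / (1 - (starRingEnd ℂ) (bpt θ) * z)) arcM := by
  simp only [div_eq_mul_inv]
  exact hh.mul_bdd (c := (1 - ‖z‖)⁻¹) (continuous_ker hz).aestronglyMeasurable
    (Eventually.of_forall (norm_ker_le hz))

lemma Pp_add {h k : ℝ → ℂ} (hh : Integrable h arcM) (hk : Integrable k arcM) {z : ℂ}
    (hz : z ∈ uDisc) : Pp (fun θ => h θ + k θ) z = Pp h z + Pp k z := by
  simp only [Pp, add_div]
  exact integral_add (integrable_ker hh hz) (integrable_ker hk hz)

lemma Pp_sub {h k : ℝ → ℂ} (hh : Integrable h arcM) (hk : Integrable k arcM) {z : ℂ}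
    (hz : z ∈ uDisc) : Pp (fun θ => h θ - k θ) z = Pp h z - Pp k z := by
  simp only [Pp, sub_div]
  exact integral_sub (integrable_ker hh hz) (integrable_ker hk hz)

lemma Pp_smul (c : ℂ) (h : ℝ → ℂ) (z : ℂ) : Pp (fun θ => c * h θ) z = c * Pp h z := by
  simp only [Pp, mul_div_assoc]
  exact integral_const_mul _ _

lemma Pp_norm_le {h : ℝ → ℂ} (hh : Integrable h arcM) {z : ℂ} (hz : z ∈ uDisc) :
    ‖Pp h z‖ ≤ (∫ θ, ‖h θ‖ ∂arcM) * (1 - ‖z‖)⁻¹ := by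
  rw [Pp, ← integral_mul_const]
  apply norm_integral_le_of_norm_le (hh.norm.mul_const _)
  refine Eventually.of_forall fun θ => ?_
  rw [div_eq_mul_inv, norm_mul]
  gcongr
  exact norm_ker_le hz θ

lemma Pp_zero (h : ℝ → ℂ) : Pp h 0 = ∫ θ, h θ ∂arcM := by simp [Pp]

lemma zero_mem_uDisc : (0:ℂ) ∈ uDisc := by simp [uDisc]

lemma Pp_analytic {h : ℝ → ℂ} (hh : Integrable h arcM) : AnalyticOnDisc (Pp h) := by
  intro z hz
  apply DifferentiableAt.differentiableWithinAt
  have hz' : ‖z‖ < 1 := by simpa [uDisc] using hz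
  obtain ⟨ρ, h1, h2⟩ := exists_between hz'
  have hs : ball (0:ℂ) ρ ∈ 𝓝 z := isOpen_ball.mem_nhds (by simpa using h1)
  have hsub : ball (0:ℂ) ρ ⊆ uDisc := ball_subset_ball h2.le
  have := hasDerivAt_integral_of_dominated_loc_of_deriv_le (μ := arcM) (x₀ := z)
    (F := fun z θ => h θ / (1 - (starRingEnd ℂ) (bpt θ) * z))
    (F' := fun z θ => h θ * ((starRingEnd ℂ) (bpt θ) * ((1 - (starRingEnd ℂ) (bpt θ) * z)⁻¹)^2))
    (bound := fun θ => ‖h θ‖ * ((1 - ρ)⁻¹)^2) hs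
    (by
      filter_upwards [hs] with w hw
      exact (integrable_ker hh (hsub hw)).aestronglyMeasurable)
    (integrable_ker hh hz)
    (by
      apply hh.aestronglyMeasurable.mul
      apply Continuous.aestronglyMeasurable
      exact (Complex.continuous_conj.comp continuous_bpt).mul ((continuous_ker hz).pow 2))
    (by
      refine Eventually.of_forall fun θ w hw => ?_
      rw [norm_mul, norm_mul, norm_pow, RCLike.norm_conj, norm_bpt, one_mul]
      gcongr
      refine (norm_ker_le (hsub hw) θ).trans ?_
      have : ‖w‖ < ρ := by simpa using hw
      apply inv_anti₀ <;> linarith)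
    (hh.norm.mul_const _)
    (by
      refine Eventually.of_forall fun θ w hw => ?_
      have hd := den_ne (hsub hw) θ
      have e : HasDerivAt (fun w => 1 - (starRingEnd ℂ) (bpt θ) * w)
          (-(starRingEnd ℂ) (bpt θ)) w := by
        simpa using ((hasDerivAt_id w).const_mul ((starRingEnd ℂ) (bpt θ))).const_sub 1
      have := (e.inv hd).const_mul (h θ)
      simp only [div_eq_mul_inv]
      have h5 : h θ * ((starRingEnd ℂ) (bpt θ) * ((1 - (starRingEnd ℂ) (bpt θ) * w)⁻¹)^2)
          = h θ * (-(-(starRingEnd ℂ) (bpt θ)) / (1 - (starRingEnd ℂ) (bpt θ) * w) ^ 2) := by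
        rw [neg_neg, div_eq_mul_inv, inv_pow]
      rw [h5]
      exact this)
  exact this.2.differentiableAt

/-- `f` has a representing function of `L¹` norm at most `c`. -/
def Qb (f : ℂ → ℂ) (c : ℝ) : Prop :=
  ∃ h : ℝ → ℂ, Integrable h arcM ∧ (∫ θ, ‖h θ‖ ∂arcM) ≤ c ∧ ∀ z ∈ uDisc, f z = Pp h z

lemma Qb.add {f g : ℂ → ℂ} {c d : ℝ} (hf : Qb f c) (hg : Qb g d) :
    Qb (fun z => f z + g z) (c + d) := by
  obtain ⟨h, h1, h2, h3⟩ := hf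
  obtain ⟨k, k1, k2, k3⟩ := hg
  refine ⟨fun θ => h θ + k θ, h1.add k1, ?_, fun z hz => ?_⟩
  · calc _ ≤ ∫ θ, ‖h θ‖ + ‖k θ‖ ∂arcM :=
        integral_mono (h1.add k1).norm (h1.norm.add k1.norm) (fun θ => norm_add_le _ _)
      _ ≤ c + d := by rw [integral_add h1.norm k1.norm]; linarith
  · simp only [Pp_add h1 k1 hz, h3 z hz, k3 z hz]

lemma Qb.smul {f : ℂ → ℂ} {c : ℝ} (hf : Qb f c) (a : ℂ) :
    Qb (fun z => a * f z) (‖a‖ * c) := by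
  obtain ⟨h, h1, h2, h3⟩ := hf
  refine ⟨fun θ => a * h θ, h1.const_mul a, ?_, fun z hz => ?_⟩
  · simp only [norm_mul, integral_const_mul]
    gcongr
  · simp only [Pp_smul, h3 z hz]

lemma Qb.mono {f : ℂ → ℂ} {c d : ℝ} (hf : Qb f c) (h : c ≤ d) : Qb f d := by
  obtain ⟨h, h1, h2, h3⟩ := hf
  exact ⟨h, h1, by linarith, h3⟩

lemma Qb.congr {f g : ℂ → ℂ} {c : ℝ} (hf : Qb f c) (h : ∀ z ∈ uDisc, g z = f z) : Qb g c := by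
  obtain ⟨k, h1, h2, h3⟩ := hf
  exact ⟨k, h1, h2, fun z hz => by rw [h z hz, h3 z hz]⟩

lemma Qb.sum {ι : Type*} (s : Finset ι) {f : ι → ℂ → ℂ} {c : ι → ℝ}
    (h : ∀ i ∈ s, Qb (f i) (c i)) : Qb (fun z => ∑ i ∈ s, f i z) (∑ i ∈ s, c i) := by
  classical
  induction s using Finset.induction_on with
  | empty => exact ⟨fun _ => 0, by simp, by simp, by simp [Pp]⟩
  | insert i s hi ih =>
    simp only [Finset.sum_insert hi]
    exact (h i (by simp)).add (ih fun j hj => h j (by simp [hj]))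

lemma Qb.kaNorm_le {f : ℂ → ℂ} {c : ℝ} (hf : Qb f c) : kaNorm f ≤ c := by
  obtain ⟨h, h1, h2, h3⟩ := hf
  refine le_trans (csInf_le ⟨0, ?_⟩ ⟨h, h1, rfl, h3⟩) h2
  rintro x ⟨k, -, rfl, -⟩
  exact integral_nonneg fun θ => norm_nonneg _

lemma Qb_of_kaNorm_lt {f : ℂ → ℂ} {c d : ℝ} (hf : Qb f d) (h : kaNorm f < c) : Qb f c := by
  obtain ⟨k, h1, h2, h3⟩ := hf
  unfold kaNorm at h
  obtain ⟨x, ⟨k, k1, k2, k3⟩, hx⟩ := exists_lt_of_csInf_lt (⟨_, ⟨k, h1, rfl, h3⟩⟩ :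
    Set.Nonempty {c : ℝ | ∃ h : ℝ → ℂ, Integrable h arcM ∧ (∫ θ, ‖h θ‖ ∂arcM) = c ∧
    ∀ z ∈ uDisc, f z = ∫ θ, h θ / (1 - (starRingEnd ℂ) (bpt θ) * z) ∂arcM}) h
  exact ⟨k, k1, by linarith, k3⟩

lemma Nice.approx {F : ℂ → ℂ} (h : Nice F) {η : ℝ} (hη : 0 < η) :
    ∃ q : Polynomial ℂ, ∀ z, ‖z‖ ≤ 1 → ‖F z - q.eval z‖ < η := by
  obtain ⟨R, hR, hF⟩ := h
  obtain ⟨S, h1, h2⟩ := exists_between hR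
  obtain ⟨T, h3, h4⟩ := exists_between h1
  lift S to NNReal using by linarith
  lift T to NNReal using by linarith
  have hp := (hF.mono (closedBall_subset_ball h2)).hasFPowerSeriesOnBall
    (by exact_mod_cast (zero_lt_one.trans h1))
  have hu := hp.tendstoUniformlyOn' (r' := T) (by exact_mod_cast h4)
  rw [Metric.tendstoUniformlyOn_iff] at hu
  obtain ⟨n, hn⟩ := (hu η hη).exists
  refine ⟨∑ i ∈ Finset.range n, Polynomial.monomial i ((cauchyPowerSeries F 0 S).coeff i),
    fun z hz => ?_⟩
  have := hn z (by simpa using lt_of_le_of_lt hz h3)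
  rw [dist_eq_norm] at this
  have h5 : (cauchyPowerSeries F 0 S).partialSum n (z - 0) =
      (∑ i ∈ Finset.range n, Polynomial.monomial i ((cauchyPowerSeries F 0 S).coeff i)).eval z := by
    simp [FormalMultilinearSeries.partialSum, Polynomial.eval_finsetSum, mul_comm]
  rw [h5] at this
  exact this

/-- a sequence of radii increasing to one -/
def rs (n : ℕ) : ℝ := 1 - 1 / ((n : ℝ) + 2)

lemma rs_mem (n : ℕ) : rs n ∈ Set.Ioo (0:ℝ) 1 := by
  have h2 : (0:ℝ) < (n:ℝ) + 2 := by positivity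
  have h3 : 1 / ((n:ℝ) + 2) < 1 := by
    rw [div_lt_one h2]; have : (0:ℝ) ≤ n := by positivity
    linarith
  have h4 : 0 < 1 / ((n:ℝ) + 2) := by positivity
  constructor <;> simp only [rs] <;> linarith

lemma rs_tendsto' : Tendsto rs atTop (𝓝 1) := by
  have h : Tendsto (fun n : ℕ => 1 / ((n:ℝ) + 2)) atTop (𝓝 0) := by
    simp only [one_div]
    apply Tendsto.inv_tendsto_atTop
    exact tendsto_atTop_add_const_right _ _ tendsto_natCast_atTop_atTop
  have := h.const_sub 1
  rw [sub_zero] at this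
  exact this

lemma rs_tendsto : Tendsto rs atTop (𝓝[<] 1) := by
  rw [tendsto_nhdsWithin_iff]
  exact ⟨rs_tendsto', Eventually.of_forall fun n => (rs_mem n).2⟩

lemma dil_mem {r : ℝ} (hr : r ∈ Set.Ioo (0:ℝ) 1) {z : ℂ} (hz : ‖z‖ ≤ 1) : (r:ℂ) * z ∈ uDisc := by
  simp only [uDisc, mem_ball_zero_iff, norm_mul, Complex.norm_real, Real.norm_of_nonneg hr.1.le]
  nlinarith [hr.1, hr.2, norm_nonneg z]

lemma dil_bpt_mem {r : ℝ} (hr : r ∈ Set.Ioo (0:ℝ) 1) (θ : ℝ) : (r:ℂ) * bpt θ ∈ uDisc :=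
  dil_mem hr (norm_bpt θ).le

section inner
variable {ϑ : ℂ → ℂ} {Θ : ℝ → ℂ}

lemma bdry_meas (h1 : MemHinf ϑ) (h2 : BoundaryFn ϑ Θ) : AEStronglyMeasurable Θ arcM := by
  apply aestronglyMeasurable_of_tendsto_ae (u := atTop)
    (f := fun n θ => ϑ ((rs n : ℂ) * bpt θ))
  · intro n
    exact (nice_dil h1.1 (rs_mem n)).continuous.aestronglyMeasurable
  · filter_upwards [h2] with θ hθ
    exact hθ.comp rs_tendsto

lemma bdry_L1 (h1 : MemHinf ϑ) (h2 : BoundaryFn ϑ Θ) (h3 : ∀ᵐ θ ∂arcM, ‖Θ θ‖ = 1) :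
    Tendsto (fun n => ∫ θ, ‖ϑ ((rs n : ℂ) * bpt θ) - Θ θ‖ ∂arcM) atTop (𝓝 0) := by
  obtain ⟨C, hC⟩ := h1.2
  have := tendsto_integral_of_dominated_convergence (μ := arcM)
    (F := fun n θ => ‖ϑ ((rs n : ℂ) * bpt θ) - Θ θ‖) (f := fun _ => 0) (fun _ => C + 1)
    (fun n => ((nice_dil h1.1 (rs_mem n)).continuous.aestronglyMeasurable.sub
      (bdry_meas h1 h2)).norm) (integrable_const _)
    (fun n => by
      filter_upwards [h3] with θ hθ
      rw [norm_norm]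
      refine (norm_sub_le _ _).trans ?_
      rw [hθ]
      gcongr
      exact hC _ (dil_bpt_mem (rs_mem n) θ))
    (by
      filter_upwards [h2] with θ hθ
      have := (hθ.comp rs_tendsto).sub_const (Θ θ)
      simpa using this.norm)
  simpa using this

lemma bdry_int (h1 : MemHinf ϑ) (h2 : BoundaryFn ϑ Θ) (h3 : ∀ᵐ θ ∂arcM, ‖Θ θ‖ = 1)
    {k : ℝ → ℂ} (hk : Integrable k arcM) : Integrable (fun θ => Θ θ * k θ) arcM :=
  hk.bdd_mul (c := 1) (bdry_meas h1 h2) (h3.mono fun _ h => h.le)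

lemma dil_sub_bdry_int (h1 : MemHinf ϑ) (h2 : BoundaryFn ϑ Θ) (h3 : ∀ᵐ θ ∂arcM, ‖Θ θ‖ = 1)
    (n : ℕ) : Integrable (fun θ => ϑ ((rs n : ℂ) * bpt θ) - Θ θ) arcM := by
  apply (nice_dil h1.1 (rs_mem n)).integrable.sub
  simpa using bdry_int h1 h2 h3 (integrable_const (1:ℂ))

/-- `(ϑ_r - ϑ) F` has small norm -/
lemma bdry_rep (h1 : MemHinf ϑ) (h2 : BoundaryFn ϑ Θ) (h3 : ∀ᵐ θ ∂arcM, ‖Θ θ‖ = 1)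
    {F : ℂ → ℂ} (hF : Nice F) {z : ℂ} (hz : z ∈ uDisc) :
    Pp (fun θ => Θ θ * F (bpt θ)) z = ϑ z * F z := by
  obtain ⟨C, hC⟩ := hF.bdd
  have hC0 : 0 ≤ C := (norm_nonneg _).trans (hC 0 (by simp))
  have e1 : ∀ n, Pp (fun θ => ϑ ((rs n : ℂ) * bpt θ) * F (bpt θ)) z = ϑ (rs n * z) * F z :=
    fun n => ((nice_dil h1.1 (rs_mem n)).mul hF).cauchy hz
  have t1 : Tendsto (fun n => ϑ (rs n * z) * F z) atTop (𝓝 (ϑ z * F z)) := by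
    apply Tendsto.mul_const
    have hc : ContinuousAt ϑ z := (h1.1.differentiableAt (isOpen_ball.mem_nhds hz)).continuousAt
    apply hc.tendsto.comp
    have : Tendsto (fun n => ((rs n : ℝ) : ℂ)) atTop (𝓝 1) := by
      have := (Complex.continuous_ofReal.tendsto 1).comp rs_tendsto'
      simpa [Function.comp_def] using this
    simpa using this.mul_const z
  have t2 : Tendsto (fun n => ϑ (rs n * z) * F z) atTop
      (𝓝 (Pp (fun θ => Θ θ * F (bpt θ)) z)) := by
    rw [tendsto_iff_norm_sub_tendsto_zero]
    have t3 := ((bdry_L1 h1 h2 h3).const_mul C).mul_const ((1 - ‖z‖)⁻¹)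
    simp only [mul_zero, zero_mul] at t3
    refine squeeze_zero (fun _ => norm_nonneg _) (fun n => ?_) t3
    have hi := dil_sub_bdry_int h1 h2 h3 n
    have i1 := ((nice_dil h1.1 (rs_mem n)).mul hF).integrable
    have i2 := bdry_int h1 h2 h3 hF.integrable
    rw [← e1, ← Pp_sub i1 i2 hz]
    refine (Pp_norm_le (i1.sub i2) hz).trans ?_
    have hz' : ‖z‖ < 1 := by simpa [uDisc] using hz
    have : 0 ≤ (1 - ‖z‖)⁻¹ := inv_nonneg.2 (by linarith)
    gcongr
    rw [← integral_const_mul]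
    apply integral_mono (i1.sub i2).norm (hi.norm.const_mul _)
    intro θ
    simp only [Pi.sub_apply]
    rw [← sub_mul, norm_mul, mul_comm]
    gcongr
    exact hC _ (norm_bpt θ).le
  exact tendsto_nhds_unique t2 t1

/-- multiplication by a nice function, in `L^1` -/
lemma Qb_dil_sub (h1 : MemHinf ϑ) (h2 : BoundaryFn ϑ Θ) (h3 : ∀ᵐ θ ∂arcM, ‖Θ θ‖ = 1)
    {F : ℂ → ℂ} (hF : Nice F) {C : ℝ} (hC : ∀ z, ‖z‖ ≤ 1 → ‖F z‖ ≤ C) (n : ℕ) :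
    Qb (fun z => (ϑ (rs n * z) - ϑ z) * F z)
      (C * ∫ θ, ‖ϑ ((rs n : ℂ) * bpt θ) - Θ θ‖ ∂arcM) := by
  have hi := dil_sub_bdry_int h1 h2 h3 n
  have i1 := ((nice_dil h1.1 (rs_mem n)).mul hF).integrable
  have i2 := bdry_int h1 h2 h3 hF.integrable
  refine ⟨_, i1.sub i2, ?_, fun z hz => ?_⟩
  · rw [← integral_const_mul]
    apply integral_mono (i1.sub i2).norm (hi.norm.const_mul _)
    intro θ
    simp only [Pi.sub_apply]
    rw [← sub_mul, norm_mul, mul_comm]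
    gcongr
    exact hC _ (norm_bpt θ).le
  · have := Pp_sub i1 i2 hz
    rw [bdry_rep h1 h2 h3 hF hz, ((nice_dil h1.1 (rs_mem n)).mul hF).cauchy hz] at this
    simp only [sub_mul]
    exact this.symm

lemma Qb_inner_mul (h1 : MemHinf ϑ) (h2 : BoundaryFn ϑ Θ) (h3 : ∀ᵐ θ ∂arcM, ‖Θ θ‖ = 1)
    {F : ℂ → ℂ} (hF : Nice F) {C : ℝ} (hC : ∀ z, ‖z‖ ≤ 1 → ‖F z‖ ≤ C) :
    Qb (fun z => ϑ z * F z) C := by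
  refine ⟨_, bdry_int h1 h2 h3 hF.integrable, ?_, fun z hz => (bdry_rep h1 h2 h3 hF hz).symm⟩
  have : ∫ θ : ℝ, C ∂arcM = C := by simp
  conv_rhs => rw [← this]
  apply integral_mono_ae (bdry_int h1 h2 h3 hF.integrable).norm (integrable_const _)
  filter_upwards [h3] with θ hθ
  rw [norm_mul, hθ, one_mul]
  exact hC _ (norm_bpt θ).le

end inner

lemma continuous_conj_bpt : Continuous (fun θ => (starRingEnd ℂ) (bpt θ)) :=
  Complex.continuous_conj.comp continuous_bpt

lemma int_conj_mul {k : ℝ → ℂ} (hk : Integrable k arcM) :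
    Integrable (fun θ => (starRingEnd ℂ) (bpt θ) * k θ) arcM :=
  hk.bdd_mul (c := 1) continuous_conj_bpt.aestronglyMeasurable
    (Eventually.of_forall fun θ => by simp [norm_bpt])

lemma Pp_conj_mul {k : ℝ → ℂ} (hk : Integrable k arcM) (h0 : ∀ z ∈ uDisc, Pp k z = 0) :
    ∀ z ∈ uDisc, Pp (fun θ => (starRingEnd ℂ) (bpt θ) * k θ) z = 0 := by
  have hne : ∀ z ∈ uDisc, z ≠ 0 → Pp (fun θ => (starRingEnd ℂ) (bpt θ) * k θ) z = 0 := by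
    intro z hz hz0
    have e : z * Pp (fun θ => (starRingEnd ℂ) (bpt θ) * k θ) z = Pp k z - Pp k 0 := by
      rw [Pp_zero, ← Pp_smul, Pp, Pp, ← integral_sub (integrable_ker hk hz) hk]
      congr 1
      ext θ
      have := den_ne hz θ
      rw [div_eq_iff this, sub_mul, div_mul_cancel₀ _ this]
      ring
    rw [h0 z hz, h0 0 zero_mem_uDisc, sub_zero] at e
    exact (mul_eq_zero.1 e).resolve_left hz0
  intro z hz
  rcases eq_or_ne z 0 with rfl | hz0
  · have hc : ContinuousAt (Pp (fun θ => (starRingEnd ℂ) (bpt θ) * k θ)) 0 :=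
      ((Pp_analytic (int_conj_mul hk)).differentiableAt (isOpen_ball.mem_nhds hz)).continuousAt
    have t1 := hc.tendsto.mono_left (nhdsWithin_le_nhds (s := {0}ᶜ))
    refine tendsto_nhds_unique t1 (tendsto_const_nhds.congr' ?_)
    filter_upwards [self_mem_nhdsWithin, mem_nhdsWithin_of_mem_nhds (isOpen_ball.mem_nhds hz)]
      with w hw hw'
    exact (hne w hw' hw).symm
  · exact hne z hz hz0

lemma Pp_conj_pow {k : ℝ → ℂ} (hk : Integrable k arcM) (h0 : ∀ z ∈ uDisc, Pp k z = 0) (n : ℕ) :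
    Integrable (fun θ => (starRingEnd ℂ) (bpt θ) ^ n * k θ) arcM ∧
    ∀ z ∈ uDisc, Pp (fun θ => (starRingEnd ℂ) (bpt θ) ^ n * k θ) z = 0 := by
  induction n with
  | zero => simpa using ⟨hk, h0⟩
  | succ n ih =>
    have e : (fun θ => (starRingEnd ℂ) (bpt θ) ^ (n+1) * k θ) =
      fun θ => (starRingEnd ℂ) (bpt θ) * ((starRingEnd ℂ) (bpt θ) ^ n * k θ) := by
      ext θ; ring
    rw [e]
    exact ⟨int_conj_mul ih.1, Pp_conj_mul ih.1 ih.2⟩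

lemma Pp_conj_poly {k : ℝ → ℂ} (hk : Integrable k arcM) (h0 : ∀ z ∈ uDisc, Pp k z = 0)
    (q : Polynomial ℂ) :
    Integrable (fun θ => q.eval ((starRingEnd ℂ) (bpt θ)) * k θ) arcM ∧
    ∀ z ∈ uDisc, Pp (fun θ => q.eval ((starRingEnd ℂ) (bpt θ)) * k θ) z = 0 := by
  induction q using Polynomial.induction_on' with
  | add p q hp hq =>
    simp only [Polynomial.eval_add, add_mul]
    refine ⟨hp.1.add hq.1, fun z hz => ?_⟩
    rw [Pp_add hp.1 hq.1 hz, hp.2 z hz, hq.2 z hz, add_zero]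
  | monomial n a =>
    have := Pp_conj_pow hk h0 n
    simp only [Polynomial.eval_monomial, mul_assoc]
    refine ⟨this.1.const_mul a, fun z hz => ?_⟩
    rw [Pp_smul, this.2 z hz, mul_zero]

lemma Pp_conj_nice {k : ℝ → ℂ} (hk : Integrable k arcM) (h0 : ∀ z ∈ uDisc, Pp k z = 0)
    {F : ℂ → ℂ} (hF : Nice F) :
    Integrable (fun θ => (starRingEnd ℂ) (F (bpt θ)) * k θ) arcM ∧
    ∀ z ∈ uDisc, Pp (fun θ => (starRingEnd ℂ) (F (bpt θ)) * k θ) z = 0 := by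
  obtain ⟨C, hC⟩ := hF.bdd
  have hi : Integrable (fun θ => (starRingEnd ℂ) (F (bpt θ)) * k θ) arcM :=
    hk.bdd_mul (c := C) (Complex.continuous_conj.comp hF.continuous).aestronglyMeasurable
      (Eventually.of_forall fun θ => by simpa using hC _ (norm_bpt θ).le)
  refine ⟨hi, fun z hz => ?_⟩
  have hz' : ‖z‖ < 1 := by simpa [uDisc] using hz
  have hzi : 0 < (1 - ‖z‖)⁻¹ := inv_pos.2 (by linarith)
  rw [← norm_le_zero_iff]
  set K : ℝ := (∫ θ, ‖k θ‖ ∂arcM) * (1 - ‖z‖)⁻¹ with hK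
  have hK0 : 0 ≤ K := mul_nonneg (integral_nonneg fun θ => norm_nonneg _) hzi.le
  have key : ∀ η > 0, ‖Pp (fun θ => (starRingEnd ℂ) (F (bpt θ)) * k θ) z‖ ≤ η * K := by
    intro η hη
    obtain ⟨q, hq⟩ := hF.approx hη
    have hp := Pp_conj_poly hk h0 (q.map (starRingEnd ℂ))
    have hev : ∀ θ, (q.map (starRingEnd ℂ)).eval ((starRingEnd ℂ) (bpt θ))
        = (starRingEnd ℂ) (q.eval (bpt θ)) := fun θ => by
      rw [Polynomial.eval_map, Polynomial.eval₂_hom]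
    have := Pp_sub hi hp.1 hz
    rw [hp.2 z hz, sub_zero] at this
    rw [← this]
    refine (Pp_norm_le (hi.sub hp.1) hz).trans ?_
    rw [hK, ← mul_assoc]
    gcongr
    rw [← integral_const_mul]
    apply integral_mono (hi.sub hp.1).norm (hk.norm.const_mul _)
    intro θ
    simp only [Pi.sub_apply, hev]
    rw [← sub_mul, norm_mul, ← map_sub, RCLike.norm_conj]
    gcongr
    exact (hq _ (norm_bpt θ).le).le
  have t : Tendsto (fun η : ℝ => η * K) (𝓝[>] 0) (𝓝 0) := by
    have : Tendsto (fun η : ℝ => η * K) (𝓝 0) (𝓝 (0 * K)) := tendsto_id.mul_const K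
    rw [zero_mul] at this
    exact this.mono_left nhdsWithin_le_nhds
  exact ge_of_tendsto t (by filter_upwards [self_mem_nhdsWithin] with η hη using key η hη)

section inner
variable {ϑ : ℂ → ℂ} {Θ : ℝ → ℂ}

lemma conj_bdry_int (h1 : MemHinf ϑ) (h2 : BoundaryFn ϑ Θ) (h3 : ∀ᵐ θ ∂arcM, ‖Θ θ‖ = 1)
    {k : ℝ → ℂ} (hk : Integrable k arcM) :
    Integrable (fun θ => (starRingEnd ℂ) (Θ θ) * k θ) arcM :=
  hk.bdd_mul (c := 1)
    (Complex.continuous_conj.comp_aestronglyMeasurable (bdry_meas h1 h2))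
    (h3.mono fun θ h => by simp [h])

lemma Pp_conj_inner (h1 : MemHinf ϑ) (h2 : BoundaryFn ϑ Θ)
    {k : ℝ → ℂ} (hk : Integrable k arcM) (h0 : ∀ z ∈ uDisc, Pp k z = 0) :
    ∀ z ∈ uDisc, Pp (fun θ => (starRingEnd ℂ) (Θ θ) * k θ) z = 0 := by
  intro z hz
  obtain ⟨C, hC⟩ := h1.2
  have hz' : ‖z‖ < 1 := by simpa [uDisc] using hz
  have hp := fun n => Pp_conj_nice hk h0 (nice_dil h1.1 (rs_mem n))
  have := tendsto_integral_of_dominated_convergence (μ := arcM)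
    (F := fun n θ => (starRingEnd ℂ) (ϑ ((rs n : ℂ) * bpt θ)) * k θ /
      (1 - (starRingEnd ℂ) (bpt θ) * z))
    (f := fun θ => (starRingEnd ℂ) (Θ θ) * k θ / (1 - (starRingEnd ℂ) (bpt θ) * z))
    (fun θ => C * ‖k θ‖ * (1 - ‖z‖)⁻¹)
    (fun n => (integrable_ker (hp n).1 hz).aestronglyMeasurable)
    ((hk.norm.const_mul _).mul_const _)
    (fun n => by
      refine Eventually.of_forall fun θ => ?_
      rw [div_eq_mul_inv, norm_mul, norm_mul, RCLike.norm_conj]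
      have hc := hC _ (dil_bpt_mem (rs_mem n) θ)
      have hc0 : 0 ≤ C := (norm_nonneg _).trans hc
      have := norm_ker_le hz θ
      gcongr)
    (by
      filter_upwards [h2] with θ hθ
      have := (Complex.continuous_conj.tendsto _).comp (hθ.comp rs_tendsto)
      exact (this.mul_const _).div_const _)
  have h4 : ∀ n, ∫ θ, (starRingEnd ℂ) (ϑ ((rs n : ℂ) * bpt θ)) * k θ /
      (1 - (starRingEnd ℂ) (bpt θ) * z) ∂arcM = 0 := fun n => (hp n).2 z hz
  simp only [h4] at this
  exact (tendsto_nhds_unique this tendsto_const_nhds)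

lemma dir_sup (h1 : MemHinf ϑ) (h2 : BoundaryFn ϑ Θ) (h3 : ∀ᵐ θ ∂arcM, ‖Θ θ‖ = 1)
    {f : ℂ → ℂ} (hf : MemKa f)
    (hcl : ∀ ε > (0 : ℝ), ∃ q : Polynomial ℂ, kaNorm (fun z => f z - ϑ z * q.eval z) < ε) :
    ∃ g : ℂ → ℂ, MemKa g ∧ ∀ z ∈ uDisc, f z = ϑ z * g z := by
  obtain ⟨h, hi, hf⟩ := hf
  have hgi := conj_bdry_int h1 h2 h3 hi
  refine ⟨_, ⟨_, hgi, fun z hz => rfl⟩, fun z hz => ?_⟩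
  change f z = ϑ z * Pp (fun θ => (starRingEnd ℂ) (Θ θ) * h θ) z
  set g := Pp (fun θ => (starRingEnd ℂ) (Θ θ) * h θ) with hg
  have hz' : ‖z‖ < 1 := by simpa [uDisc] using hz
  have hzi : 0 < (1 - ‖z‖)⁻¹ := inv_pos.2 (by linarith)
  have key : ∀ ε > (0:ℝ), ‖f z - ϑ z * g z‖ ≤ ε * ((1 - ‖z‖)⁻¹ * (1 + ‖ϑ z‖)) := by
    intro ε hε
    obtain ⟨q, hq⟩ := hcl ε hε
    obtain ⟨C, hC⟩ := (nice_poly q).bdd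
    have Q0 : Qb (fun z => f z - ϑ z * q.eval z) ((∫ θ, ‖h θ‖ ∂arcM) + ‖(-1:ℂ)‖ * C) :=
      (Qb.add ⟨h, hi, le_rfl, hf⟩ ((Qb_inner_mul h1 h2 h3 (nice_poly q) hC).smul (-1))).congr
        (fun z _ => by ring)
    obtain ⟨w, wi, wn, wz⟩ := Qb_of_kaNorm_lt Q0 hq
    have iq := bdry_int h1 h2 h3 (nice_poly q).integrable
    have i4 := (hi.sub iq).sub wi
    have e1 : ∀ z ∈ uDisc, Pp (fun θ => h θ - Θ θ * q.eval (bpt θ) - w θ) z = 0 := by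
      intro z hz
      have a1 := Pp_sub (h := fun θ => h θ - Θ θ * q.eval (bpt θ)) (hi.sub iq) wi hz
      have a2 := Pp_sub hi iq hz
      have a3 := bdry_rep h1 h2 h3 (nice_poly q) hz
      have a4 : f z - ϑ z * q.eval z = Pp w z := wz z hz
      have a5 : f z = Pp h z := hf z hz
      rw [a1, a2, a3, ← a4, a5]
      ring
    have e2 := Pp_conj_inner h1 h2 i4 e1 z hz
    have wi' := conj_bdry_int h1 h2 h3 wi
    have e3 : Pp (fun θ => (starRingEnd ℂ) (Θ θ) * (h θ - Θ θ * q.eval (bpt θ) - w θ)) z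
        = g z - q.eval z - Pp (fun θ => (starRingEnd ℂ) (Θ θ) * w θ) z := by
      have b1 := Pp_sub (h := fun θ => (starRingEnd ℂ) (Θ θ) * h θ - q.eval (bpt θ))
        (hgi.sub (nice_poly q).integrable) wi' hz
      have b2 := Pp_sub hgi (nice_poly q).integrable hz
      rw [b2, (nice_poly q).cauchy hz] at b1
      rw [← b1]
      apply integral_congr_ae
      filter_upwards [h3] with θ hθ
      have : (starRingEnd ℂ) (Θ θ) * Θ θ = 1 := by
        rw [mul_comm, Complex.mul_conj, Complex.normSq_eq_norm_sq, hθ]; simp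
      congr 1
      linear_combination (-q.eval (bpt θ)) * this
    have e4 : Pp (fun θ => (starRingEnd ℂ) (Θ θ) * (h θ - Θ θ * q.eval (bpt θ) - w θ)) z = 0 := e2
    rw [e4] at e3
    have n1 := Pp_norm_le wi hz
    have n2 := Pp_norm_le wi' hz
    have n3 : ∫ θ, ‖(starRingEnd ℂ) (Θ θ) * w θ‖ ∂arcM = ∫ θ, ‖w θ‖ ∂arcM := by
      apply integral_congr_ae
      filter_upwards [h3] with θ hθ
      simp [hθ]
    rw [n3] at n2
    have e5 : f z - ϑ z * g z = Pp w z - ϑ z * Pp (fun θ => (starRingEnd ℂ) (Θ θ) * w θ) z := by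
      have := wz z hz
      linear_combination this + ϑ z * e3
    rw [e5]
    calc _ ≤ ‖Pp w z‖ + ‖ϑ z‖ * ‖Pp (fun θ => (starRingEnd ℂ) (Θ θ) * w θ) z‖ := by
          refine (norm_sub_le _ _).trans ?_
          rw [norm_mul]
      _ ≤ ε * (1 - ‖z‖)⁻¹ + ‖ϑ z‖ * (ε * (1 - ‖z‖)⁻¹) := by
          have : (∫ θ, ‖w θ‖ ∂arcM) * (1 - ‖z‖)⁻¹ ≤ ε * (1 - ‖z‖)⁻¹ := by gcongr
          gcongr <;> linarith
      _ = _ := by ring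
  rw [← sub_eq_zero, ← norm_le_zero_iff]
  set K := ((1 - ‖z‖)⁻¹ * (1 + ‖ϑ z‖))
  have t : Tendsto (fun η : ℝ => η * K) (𝓝[>] 0) (𝓝 0) := by
    have : Tendsto (fun η : ℝ => η * K) (𝓝 0) (𝓝 (0 * K)) := tendsto_id.mul_const K
    rw [zero_mul] at this
    exact this.mono_left nhdsWithin_le_nhds
  exact ge_of_tendsto t (by filter_upwards [self_mem_nhdsWithin] with η hη using key η hη)

end inner

section pointwise

lemma pw_ne {w : ℂ} (hw : 0 ≤ w.re) {ε : ℝ} (hε : 0 < ε) : 1 + ε * w ≠ 0 := by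
  intro h
  have := congrArg Complex.re h
  simp at this
  nlinarith

lemma pw_norm {w : ℂ} (hw : 0 ≤ w.re) {ε : ℝ} (hε : 0 < ε) : ‖(1 + ε * w)⁻¹‖ ≤ 1 := by
  rw [norm_inv]
  apply inv_le_one_of_one_le₀
  refine le_trans ?_ (Complex.re_le_norm _)
  simp
  positivity

lemma pw_one_sub {w : ℂ} (hw : 0 ≤ w.re) {ε : ℝ} (hε : 0 < ε) :
    1 - (1 + ε * w)⁻¹ = ε * (w * (1 + ε * w)⁻¹) := by
  have := pw_ne hw hε
  field_simp
  ring

lemma pw_norm_one_sub {w : ℂ} (hw : 0 ≤ w.re) {ε : ℝ} (hε : 0 < ε) :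
    ‖1 - (1 + ε * w)⁻¹‖ = ε * ‖w * (1 + ε * w)⁻¹‖ := by
  rw [pw_one_sub hw hε, norm_mul, Complex.norm_real, Real.norm_of_nonneg hε.le]

lemma pw_norm_one_sub_le {w : ℂ} (hw : 0 ≤ w.re) {ε : ℝ} (hε : 0 < ε) :
    ‖1 - (1 + ε * w)⁻¹‖ ≤ 2 := by
  refine (norm_sub_le _ _).trans ?_
  have := pw_norm hw hε
  rw [norm_one]; linarith

lemma pw_re {w : ℂ} (hw : 0 ≤ w.re) {ε : ℝ} (hε : 0 < ε) :
    (w * (1 + ε * w)⁻¹).re = w.re * ‖(1 + ε * w)⁻¹‖ ^ 2 + ε * ‖w * (1 + ε * w)⁻¹‖ ^ 2 := by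
  set v := (1 + ε * w)⁻¹ with hv
  have h1 : (1 + ε * w) * v = 1 := mul_inv_cancel₀ (pw_ne hw hε)
  have h2 : w * v = w * v * (starRingEnd ℂ) ((1 + ε * w) * v) := by rw [h1]; simp
  have h3 : w * v = w * ((‖v‖ ^ 2 : ℝ) : ℂ) + ((ε * ‖w * v‖ ^ 2 : ℝ) : ℂ) := by
    have a1 : ((‖v‖ ^ 2 : ℝ) : ℂ) = v * (starRingEnd ℂ) v := by
      rw [Complex.mul_conj, Complex.normSq_eq_norm_sq]
    have a2 : ((‖w * v‖ ^ 2 : ℝ) : ℂ) = w * v * (starRingEnd ℂ) (w * v) := by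
      rw [Complex.mul_conj, Complex.normSq_eq_norm_sq]
    rw [Complex.ofReal_mul, a1, a2]
    conv_lhs => rw [h2]
    simp only [map_mul, map_add, map_one, Complex.conj_ofReal]
    ring
  have h4 := congrArg Complex.re h3
  rw [h4, Complex.add_re, Complex.re_mul_ofReal, Complex.ofReal_re]

lemma pw_conj {w : ℂ} (hw : 0 ≤ w.re) {ε : ℝ} (hε : 0 < ε) :
    ‖(1 + ε * w)⁻¹ - (starRingEnd ℂ) ((1 + ε * w)⁻¹)‖ ≤
      2 * ε * ‖w * (1 + ε * w)⁻¹‖ * ‖(1 + ε * w)⁻¹‖ := by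
  set v := (1 + ε * w)⁻¹ with hv
  have h1 : (1 + ε * w) * v = 1 := mul_inv_cancel₀ (pw_ne hw hε)
  have h1' : (1 + ε * (starRingEnd ℂ) w) * (starRingEnd ℂ) v = 1 := by
    have := congrArg (starRingEnd ℂ) h1
    simpa using this
  have h2 : v - (starRingEnd ℂ) v
      = ε * (v * (starRingEnd ℂ) (w * v)) - ε * ((w * v) * (starRingEnd ℂ) v) := by
    rw [map_mul]
    linear_combination (-v) * h1' + (starRingEnd ℂ) v * h1
  rw [h2]
  refine (norm_sub_le _ _).trans ?_
  simp only [norm_mul, RCLike.norm_conj, Complex.norm_real, Real.norm_of_nonneg hε.le]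
  apply le_of_eq
  ring

lemma pw_bound {w : ℂ} (hw : 0 ≤ w.re) {ε : ℝ} (hε : 0 < ε) :
    ‖w * (1 + ε * w)⁻¹‖ ≤ 2 / ε := by
  have h1 := pw_norm_one_sub hw hε
  have h2 := pw_norm_one_sub_le hw hε
  rw [le_div_iff₀ hε]
  linarith

lemma prod_norm_le_one {ι : Type*} (s : Finset ι) {v : ι → ℂ} (hv : ∀ i ∈ s, ‖v i‖ ≤ 1) :
    ‖∏ i ∈ s, v i‖ ≤ 1 := by
  rw [norm_prod]
  exact Finset.prod_le_one (fun i _ => norm_nonneg _) hv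

lemma prod_sub_le {ι : Type*} (s : Finset ι) {v w : ι → ℂ} (hv : ∀ i ∈ s, ‖v i‖ ≤ 1)
    (hw : ∀ i ∈ s, ‖w i‖ ≤ 1) :
    ‖∏ i ∈ s, v i - ∏ i ∈ s, w i‖ ≤ ∑ i ∈ s, ‖v i - w i‖ := by
  classical
  induction s using Finset.induction_on with
  | empty => simp
  | insert i s hi ih =>
    rw [Finset.prod_insert hi, Finset.prod_insert hi, Finset.sum_insert hi]
    have h1 := ih (fun j hj => hv j (by simp [hj])) (fun j hj => hw j (by simp [hj]))
    have h2 := prod_norm_le_one s (fun j hj => hv j (by simp [hj]))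
    have h3 := hw i (by simp)
    have e : v i * ∏ i ∈ s, v i - w i * ∏ i ∈ s, w i =
      (v i - w i) * ∏ i ∈ s, v i + w i * (∏ i ∈ s, v i - ∏ i ∈ s, w i) := by ring
    rw [e]
    refine (norm_add_le _ _).trans ?_
    rw [norm_mul, norm_mul]
    have := mul_le_mul_of_nonneg_left h2 (norm_nonneg (v i - w i))
    have := mul_le_mul_of_nonneg_right h3 (norm_nonneg (∏ i ∈ s, v i - ∏ i ∈ s, w i))
    linarith

lemma pw_key {ι : Type*} [Fintype ι] [DecidableEq ι] {w : ι → ℂ} (hw : ∀ i, 0 ≤ (w i).re) {ε : ℝ}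
    (hε : 0 < ε) (j : ι) :
    ‖w j‖ * ‖∏ i, (1 + ε * w i)⁻¹ - (starRingEnd ℂ) (∏ i, (1 + ε * w i)⁻¹)‖ ≤
      ∑ l, (ε * ‖w j * (1 + ε * w j)⁻¹‖ ^ 2 + ε * ‖w l * (1 + ε * w l)⁻¹‖ ^ 2) := by
  set v : ι → ℂ := fun i => (1 + ε * w i)⁻¹ with hv
  have hv1 : ∀ i, ‖v i‖ ≤ 1 := fun i => pw_norm (hw i) hε
  have hc : ∀ i, ‖v i - (starRingEnd ℂ) (v i)‖ ≤ 2 * ε * ‖w i * v i‖ * ‖v i‖ :=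
    fun i => pw_conj (hw i) hε
  change ‖w j‖ * ‖∏ i, v i - (starRingEnd ℂ) (∏ i, v i)‖ ≤
    ∑ l, (ε * ‖w j * v j‖ ^ 2 + ε * ‖w l * v l‖ ^ 2)
  rw [map_prod, ← Finset.mul_prod_erase _ _ (Finset.mem_univ j),
    ← Finset.mul_prod_erase Finset.univ (fun i => (starRingEnd ℂ) (v i)) (Finset.mem_univ j),
    ← Finset.add_sum_erase _ _ (Finset.mem_univ j)]
  set s := Finset.univ.erase j
  have h1 := prod_sub_le s (v := v) (w := fun i => (starRingEnd ℂ) (v i)) (fun i _ => hv1 i)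
    (fun i _ => by simpa using hv1 i)
  have h2 := prod_norm_le_one s (fun i _ => hv1 i)
  have e : v j * ∏ i ∈ s, v i - (starRingEnd ℂ) (v j) * ∏ i ∈ s, (starRingEnd ℂ) (v i) =
      (v j - (starRingEnd ℂ) (v j)) * ∏ i ∈ s, v i +
        (starRingEnd ℂ) (v j) * (∏ i ∈ s, v i - ∏ i ∈ s, (starRingEnd ℂ) (v i)) := by ring
  have h3 : ‖v j * ∏ i ∈ s, v i - (starRingEnd ℂ) (v j) * ∏ i ∈ s, (starRingEnd ℂ) (v i)‖ ≤
      2 * ε * ‖w j * v j‖ * ‖v j‖ + ‖v j‖ * ∑ i ∈ s, 2 * ε * ‖w i * v i‖ := by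
    rw [e]
    refine (norm_add_le _ _).trans ?_
    rw [norm_mul, norm_mul, RCLike.norm_conj]
    have a1 := mul_le_mul_of_nonneg_left h2 (norm_nonneg (v j - (starRingEnd ℂ) (v j)))
    have a2 : ∑ i ∈ s, ‖v i - (starRingEnd ℂ) (v i)‖ ≤ ∑ i ∈ s, 2 * ε * ‖w i * v i‖ := by
      apply Finset.sum_le_sum
      intro i _
      have b1 := mul_le_mul_of_nonneg_left (hv1 i)
        (show 0 ≤ 2 * ε * ‖w i * v i‖ by positivity)
      linarith [hc i]
    have a3 := mul_le_mul_of_nonneg_left (h1.trans a2) (norm_nonneg (v j))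
    linarith [hc j]
  refine (mul_le_mul_of_nonneg_left h3 (norm_nonneg _)).trans ?_
  have e2 : ‖w j‖ * (2 * ε * ‖w j * v j‖ * ‖v j‖ + ‖v j‖ * ∑ i ∈ s, 2 * ε * ‖w i * v i‖)
      = 2 * ε * ‖w j * v j‖ ^ 2 + ∑ i ∈ s, 2 * ε * ‖w j * v j‖ * ‖w i * v i‖ := by
    rw [mul_add, ← mul_assoc (‖w j‖) (‖v j‖), ← norm_mul, Finset.mul_sum]
    congr 1
    · have : ‖w j * v j‖ = ‖w j‖ * ‖v j‖ := norm_mul _ _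
      rw [this]; ring
    · apply Finset.sum_congr rfl
      intro i _
      ring
  rw [e2]
  have h4 : ∑ i ∈ s, 2 * ε * ‖w j * v j‖ * ‖w i * v i‖ ≤
      ∑ i ∈ s, (ε * ‖w j * v j‖ ^ 2 + ε * ‖w i * v i‖ ^ 2) := by
    apply Finset.sum_le_sum
    intro i _
    have := mul_nonneg hε.le (sq_nonneg (‖w j * v j‖ - ‖w i * v i‖))
    nlinarith
  linarith

end pointwise

/-- functions with positive real part, analytic near the closed disc -/
structure PN (F : ℂ → ℂ) (c : ℝ) : Prop where
  pos : 0 ≤ c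
  zero : F 0 = c
  ex : ∃ R : ℝ, 1 < R ∧ DifferentiableOn ℂ F (ball 0 R) ∧ ∀ z ∈ ball (0:ℂ) R, c / 2 ≤ (F z).re

namespace PN

variable {F : ℂ → ℂ} {c : ℝ}

lemma nice (h : PN F c) : Nice F := by
  obtain ⟨R, h1, h2, _⟩ := h.ex
  exact ⟨R, h1, h2⟩

lemma re_ge (h : PN F c) {z : ℂ} (hz : ‖z‖ ≤ 1) : c / 2 ≤ (F z).re := by
  obtain ⟨R, h1, _, h2⟩ := h.ex
  exact h2 z (by simpa using lt_of_le_of_lt hz h1)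

lemma re_nonneg (h : PN F c) {z : ℂ} (hz : ‖z‖ ≤ 1) : 0 ≤ (F z).re :=
  le_trans (by linarith [h.pos]) (h.re_ge hz)

lemma re_b (h : PN F c) (θ : ℝ) : 0 ≤ (F (bpt θ)).re := h.re_nonneg (norm_bpt θ).le

lemma inv_nice (h : PN F c) {ε : ℝ} (hε : 0 < ε) : Nice (fun z => (1 + ε * F z)⁻¹) := by
  obtain ⟨R, h1, h2, h3⟩ := h.ex
  refine ⟨R, h1, ?_⟩
  apply DifferentiableOn.inv
  · exact (h2.const_mul _).const_add _
  · intro z hz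
    exact pw_ne (le_trans (by linarith [h.pos]) (h3 z hz)) hε

lemma mean_re (h : PN F c) : ∫ θ, (F (bpt θ)).re ∂arcM = c := by
  have h1 := h.nice.mean
  have h2 := integral_re h.nice.integrable
  simp only [RCLike.re_eq_complex_re] at h2
  rw [h2, h1, h.zero, Complex.ofReal_re]

lemma mean_reu (h : PN F c) {ε : ℝ} (hε : 0 < ε) :
    ∫ θ, (F (bpt θ) * (1 + ε * F (bpt θ))⁻¹).re ∂arcM ≤ c := by
  have hn := h.nice.mul (h.inv_nice hε)
  have h1 := hn.mean
  have h2 := integral_re hn.integrable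
  simp only [RCLike.re_eq_complex_re] at h2
  rw [h2, h1, h.zero]
  have : (c:ℂ) * (1 + (ε:ℂ) * (c:ℂ))⁻¹ = ((c * (1 + ε * c)⁻¹ : ℝ) : ℂ) := by push_cast; rfl
  rw [this, Complex.ofReal_re]
  have h3 := h.pos
  have h4 : (1 + ε * c)⁻¹ ≤ 1 := by
    apply inv_le_one_of_one_le₀
    have := mul_nonneg hε.le h3
    linarith
  nlinarith

lemma cont_re (h : PN F c) : Continuous (fun θ => (F (bpt θ)).re) :=
  Complex.continuous_re.comp h.nice.continuous

lemma cont_x (h : PN F c) {ε : ℝ} (hε : 0 < ε) :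
    Continuous (fun θ => ‖F (bpt θ) * (1 + ε * F (bpt θ))⁻¹‖) :=
  (h.nice.continuous.mul (h.inv_nice hε).continuous).norm

lemma cont_1u (h : PN F c) {ε : ℝ} (hε : 0 < ε) :
    Continuous (fun θ => ‖1 - (1 + ε * F (bpt θ))⁻¹‖) :=
  (continuous_const.sub (h.inv_nice hε).continuous).norm

lemma int_sq_eq (h : PN F c) {ε : ℝ} (hε : 0 < ε) :
    ∫ θ, ε * ‖F (bpt θ) * (1 + ε * F (bpt θ))⁻¹‖ ^ 2 ∂arcM ≤
      c - ∫ θ, (F (bpt θ)).re * ‖(1 + ε * F (bpt θ))⁻¹‖ ^ 2 ∂arcM := by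
  have h1 := h.mean_reu hε
  have h2 : ∫ θ, (F (bpt θ) * (1 + ε * F (bpt θ))⁻¹).re ∂arcM =
      ∫ θ, ((F (bpt θ)).re * ‖(1 + ε * F (bpt θ))⁻¹‖ ^ 2 +
        ε * ‖F (bpt θ) * (1 + ε * F (bpt θ))⁻¹‖ ^ 2) ∂arcM := by
    congr 1
    ext θ
    exact pw_re (h.re_b θ) hε
  rw [integral_add] at h2
  · linarith
  · exact integrable_of_cont (h.cont_re.mul ((h.inv_nice hε).continuous.norm.pow 2))
  · exact integrable_of_cont (continuous_const.mul ((h.cont_x hε).pow 2))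

lemma int_sq_le (h : PN F c) {ε : ℝ} (hε : 0 < ε) :
    ∫ θ, ε * ‖F (bpt θ) * (1 + ε * F (bpt θ))⁻¹‖ ^ 2 ∂arcM ≤ c := by
  have h1 := h.int_sq_eq hε
  have : 0 ≤ ∫ θ, (F (bpt θ)).re * ‖(1 + ε * F (bpt θ))⁻¹‖ ^ 2 ∂arcM :=
    integral_nonneg fun θ => mul_nonneg (h.re_b θ) (by positivity)
  linarith

end PN

/-- the basic small quantity -/
def SS (ε : ℝ) (F G : ℂ → ℂ) : ℝ :=
  ∫ θ, 2 * (F (bpt θ)).re * ‖1 - (1 + ε * G (bpt θ))⁻¹‖ ∂arcM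

lemma PN.int_sq_le_SS {F : ℂ → ℂ} {c : ℝ} (h : PN F c) {ε : ℝ} (hε : 0 < ε) :
    ∫ θ, ε * ‖F (bpt θ) * (1 + ε * F (bpt θ))⁻¹‖ ^ 2 ∂arcM ≤ SS ε F F := by
  refine (h.int_sq_eq hε).trans ?_
  have i1 : Integrable (fun θ => (F (bpt θ)).re * ‖(1 + ε * F (bpt θ))⁻¹‖ ^ 2) arcM :=
    integrable_of_cont (h.cont_re.mul ((h.inv_nice hε).continuous.norm.pow 2))
  rw [← h.mean_re, ← integral_sub (integrable_of_cont h.cont_re) i1]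
  apply integral_mono ((integrable_of_cont h.cont_re).sub i1)
    (integrable_of_cont ((continuous_const.mul h.cont_re).mul (h.cont_1u hε)))
  intro θ
  change (F (bpt θ)).re - (F (bpt θ)).re * ‖(1 + ε * F (bpt θ))⁻¹‖ ^ 2 ≤
    2 * (F (bpt θ)).re * ‖1 - (1 + ε * F (bpt θ))⁻¹‖
  set v := (1 + ε * F (bpt θ))⁻¹ with hv
  have h1 : ‖v‖ ≤ 1 := pw_norm (h.re_b θ) hε
  have h2 : 1 - ‖v‖ ≤ ‖1 - v‖ := by simpa using norm_sub_norm_le (1:ℂ) v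
  have h3 := h.re_b θ
  have h4 : 1 - ‖v‖ ^ 2 ≤ 2 * ‖1 - v‖ := by nlinarith [norm_nonneg v, norm_nonneg (1 - v)]
  have h5 := mul_le_mul_of_nonneg_left h4 h3
  linarith

lemma PN.key {ι : Type*} [Fintype ι] [DecidableEq ι] {F : ι → ℂ → ℂ} {c : ι → ℝ}
    (h : ∀ i, PN (F i) (c i)) {ε : ℝ} (hε : 0 < ε) (j : ι) :
    Qb (fun z => F j z * (1 - ∏ i, (1 + ε * F i z)⁻¹))
      (∑ l, (3 * SS ε (F j) (F l) + SS ε (F j) (F j) + SS ε (F l) (F l))) := by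
  have hU : Nice (fun z => ∏ i, (1 + ε * F i z)⁻¹) := Nice.prod _ fun i _ => (h i).inv_nice hε
  have hA : Nice (fun z => F j z * (1 - ∏ i, (1 + ε * F i z)⁻¹)) :=
    (h j).nice.mul ((nice_const 1).sub hU)
  have hB : Nice (fun z => (F j z - c j) * (1 - ∏ i, (1 + ε * F i z)⁻¹)) :=
    ((h j).nice.sub (nice_const _)).mul ((nice_const 1).sub hU)
  have iB : Integrable (fun θ => (starRingEnd ℂ) ((F j (bpt θ) - c j) *
      (1 - ∏ i, (1 + ε * F i (bpt θ))⁻¹))) arcM :=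
    integrable_of_cont (Complex.continuous_conj.comp hB.continuous)
  refine ⟨_, hA.integrable.add iB, ?_, fun z hz => ?_⟩
  swap
  · have := Pp_add hA.integrable iB hz
    rw [hA.cauchy hz, hB.cauchy_conj hz, (h j).zero] at this
    simp only [sub_self, zero_mul, map_zero, add_zero] at this
    exact this.symm
  have iSS : ∀ l, Integrable (fun θ => 2 * (F j (bpt θ)).re * ‖1 - (1 + ε * F l (bpt θ))⁻¹‖)
      arcM := fun l => integrable_of_cont
        ((continuous_const.mul (h j).cont_re).mul ((h l).cont_1u hε))
  have isq : ∀ l, Integrable (fun θ => ε * ‖F l (bpt θ) * (1 + ε * F l (bpt θ))⁻¹‖ ^ 2) arcM :=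
    fun l => integrable_of_cont (continuous_const.mul (((h l).cont_x hε).pow 2))
  have i2 : ∀ l, Integrable (fun θ => 3 * (2 * (F j (bpt θ)).re *
      ‖1 - (1 + ε * F l (bpt θ))⁻¹‖) + ε * ‖F j (bpt θ) * (1 + ε * F j (bpt θ))⁻¹‖ ^ 2) arcM :=
    fun l => ((iSS l).const_mul 3).add (isq j)
  have i3 : ∀ l, Integrable (fun θ => 3 * (2 * (F j (bpt θ)).re *
      ‖1 - (1 + ε * F l (bpt θ))⁻¹‖) + ε * ‖F j (bpt θ) * (1 + ε * F j (bpt θ))⁻¹‖ ^ 2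
        + ε * ‖F l (bpt θ) * (1 + ε * F l (bpt θ))⁻¹‖ ^ 2) arcM :=
    fun l => (i2 l).add (isq l)
  have ib : Integrable (fun θ => ∑ l, (3 * (2 * (F j (bpt θ)).re *
      ‖1 - (1 + ε * F l (bpt θ))⁻¹‖) + ε * ‖F j (bpt θ) * (1 + ε * F j (bpt θ))⁻¹‖ ^ 2
        + ε * ‖F l (bpt θ) * (1 + ε * F l (bpt θ))⁻¹‖ ^ 2)) arcM :=
    integrable_finsetSum _ fun l _ => i3 l
  have step : ∫ θ, ∑ l, (3 * (2 * (F j (bpt θ)).re *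
      ‖1 - (1 + ε * F l (bpt θ))⁻¹‖) + ε * ‖F j (bpt θ) * (1 + ε * F j (bpt θ))⁻¹‖ ^ 2
        + ε * ‖F l (bpt θ) * (1 + ε * F l (bpt θ))⁻¹‖ ^ 2) ∂arcM ≤
      ∑ l, (3 * SS ε (F j) (F l) + SS ε (F j) (F j) + SS ε (F l) (F l)) := by
    rw [integral_finsetSum _ fun l _ => i3 l]
    apply Finset.sum_le_sum
    intro l _
    rw [integral_add (i2 l) (isq l),
      integral_add ((iSS l).const_mul 3) (isq j), integral_const_mul]
    have a1 := (h j).int_sq_le_SS hε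
    have a2 := (h l).int_sq_le_SS hε
    have a3 : SS ε (F j) (F l) = ∫ θ, 2 * (F j (bpt θ)).re * ‖1 - (1 + ε * F l (bpt θ))⁻¹‖ ∂arcM :=
      rfl
    linarith
  refine le_trans (integral_mono (hA.integrable.add iB).norm ib fun θ => ?_) step
  simp only [Pi.add_apply]
  have hj := (h j).re_ge (norm_bpt θ).le
  have hc := (h j).pos
  have hk := pw_key (w := fun i => F i (bpt θ)) (fun i => (h i).re_b θ) hε j
  have h1u := prod_sub_le Finset.univ (v := fun _ => (1:ℂ))
    (w := fun i => (1 + ε * F i (bpt θ))⁻¹) (by simp) (fun i _ => pw_norm ((h i).re_b θ) hε)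
  simp only [Finset.prod_const_one] at h1u
  beta_reduce at hk
  set U := ∏ i, (1 + ε * F i (bpt θ))⁻¹ with hUdef
  set f := F j (bpt θ) with hf
  set D := ∑ l, ‖1 - (1 + ε * F l (bpt θ))⁻¹‖ with hD
  have e : f * (1 - U) + (starRingEnd ℂ) ((f - c j) * (1 - U)) =
      ((2 * f.re - c j : ℝ) : ℂ) * (1 - U) + (starRingEnd ℂ) f * (U - (starRingEnd ℂ) U)
       - c j * ((1 - (starRingEnd ℂ) U) - (1 - U)) := by
    have : ((2 * f.re - c j : ℝ) : ℂ) = f + (starRingEnd ℂ) f - c j := by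
      rw [Complex.add_conj]; push_cast; ring
    rw [this]
    simp only [map_mul, map_sub, map_one, Complex.conj_ofReal]
    ring
  have hcon : ‖1 - (starRingEnd ℂ) U‖ = ‖1 - U‖ := by
    rw [← RCLike.norm_conj]; simp
  have n1 : ‖((2 * f.re - c j : ℝ) : ℂ) * (1 - U)‖ ≤ (2 * f.re - c j) * D := by
    rw [norm_mul, Complex.norm_real, Real.norm_of_nonneg (by linarith)]
    exact mul_le_mul_of_nonneg_left h1u (by linarith)
  have n3 : ‖c j * ((1 - (starRingEnd ℂ) U) - (1 - U))‖ ≤ c j * (2 * D) := by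
    rw [norm_mul, Complex.norm_real, Real.norm_of_nonneg hc]
    apply mul_le_mul_of_nonneg_left _ hc
    refine (norm_sub_le _ _).trans ?_
    rw [hcon]; linarith
  have n2 : ‖(starRingEnd ℂ) f * (U - (starRingEnd ℂ) U)‖ ≤
      ∑ l, (ε * ‖f * (1 + ε * f)⁻¹‖ ^ 2 +
        ε * ‖F l (bpt θ) * (1 + ε * F l (bpt θ))⁻¹‖ ^ 2) := by
    rw [norm_mul, RCLike.norm_conj]
    exact hk
  have hD0 : 0 ≤ D := Finset.sum_nonneg fun _ _ => norm_nonneg _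
  have esum : ∑ l, (3 * (2 * f.re * ‖1 - (1 + ε * F l (bpt θ))⁻¹‖) +
      ε * ‖f * (1 + ε * f)⁻¹‖ ^ 2 + ε * ‖F l (bpt θ) * (1 + ε * F l (bpt θ))⁻¹‖ ^ 2) =
      6 * f.re * D + ∑ l, (ε * ‖f * (1 + ε * f)⁻¹‖ ^ 2 +
        ε * ‖F l (bpt θ) * (1 + ε * F l (bpt θ))⁻¹‖ ^ 2) := by
    rw [hD, Finset.mul_sum, ← Finset.sum_add_distrib]
    apply Finset.sum_congr rfl
    intro l _
    ring
  rw [esum, e]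
  refine (norm_sub_le _ _).trans ?_
  have n4 := norm_add_le (((2 * f.re - c j : ℝ) : ℂ) * (1 - U))
    ((starRingEnd ℂ) f * (U - (starRingEnd ℂ) U))
  have n5 : c j * D ≤ 2 * f.re * D := mul_le_mul_of_nonneg_right (by linarith) hD0
  have n6 := mul_nonneg hc hD0
  have n7 : 0 ≤ f.re * D := mul_nonneg (by linarith) hD0
  nlinarith

/-- Cauchy integral of a real function -/
def Pr (k : ℝ → ℝ) (z : ℂ) : ℂ := Pp (fun θ => (k θ : ℂ)) z

lemma half_le_re {w : ℂ} (hw : ‖w‖ < 1) : 1 / 2 ≤ ((1 - w)⁻¹).re := by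
  have h0 : 1 - w ≠ 0 := by
    intro h
    have : w = 1 := by linear_combination -h
    rw [this] at hw; simp at hw
  have hp : 0 < Complex.normSq (1 - w) := Complex.normSq_pos.2 h0
  rw [Complex.inv_re, div_le_div_iff₀ (by norm_num) hp]
  have h2 : w.re ^ 2 + w.im ^ 2 < 1 := by
    have := Complex.sq_norm w
    rw [Complex.normSq_apply] at this
    nlinarith [norm_nonneg w]
  rw [Complex.normSq_apply]
  simp
  nlinarith

lemma ker_re {z : ℂ} (hz : z ∈ uDisc) (θ : ℝ) :
    1 / 2 ≤ ((1 - (starRingEnd ℂ) (bpt θ) * z)⁻¹).re := by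
  apply half_le_re
  simpa [norm_bpt, uDisc] using hz

lemma Pr_re {k : ℝ → ℝ} (hk : Integrable k arcM) {z : ℂ} (hz : z ∈ uDisc) :
    Integrable (fun θ => k θ * ((1 - (starRingEnd ℂ) (bpt θ) * z)⁻¹).re) arcM ∧
    (Pr k z).re = ∫ θ, k θ * ((1 - (starRingEnd ℂ) (bpt θ) * z)⁻¹).re ∂arcM := by
  have h1 := integrable_ker (hk.ofReal (𝕜 := ℂ)) hz
  have e : ∀ θ, (((k θ : ℝ) : ℂ) / (1 - (starRingEnd ℂ) (bpt θ) * z)).re =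
      k θ * ((1 - (starRingEnd ℂ) (bpt θ) * z)⁻¹).re := by
    intro θ
    rw [div_eq_mul_inv, Complex.re_ofReal_mul]
  have h2 := integral_re h1
  have h3 := h1.re
  simp only [RCLike.re_eq_complex_re, Complex.coe_algebraMap] at h2 h3
  constructor
  · refine h3.congr (Eventually.of_forall fun θ => ?_)
    exact e θ
  · rw [Pr, Pp, ← h2]
    congr 1
    ext θ
    exact e θ

lemma Pr_re_ge {k : ℝ → ℝ} (hk : Integrable k arcM) (hk0 : ∀ θ, 0 ≤ k θ) {z : ℂ} (hz : z ∈ uDisc) :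
    (∫ θ, k θ ∂arcM) / 2 ≤ (Pr k z).re := by
  obtain ⟨h1, h2⟩ := Pr_re hk hz
  rw [h2, div_eq_mul_inv, ← integral_mul_const]
  apply integral_mono (hk.mul_const _) h1
  intro θ
  have := mul_le_mul_of_nonneg_left (ker_re hz θ) (hk0 θ)
  beta_reduce
  linarith

lemma Pr_const {z : ℂ} (hz : z ∈ uDisc) (M : ℝ) : Pr (fun _ => M) z = M :=
  (nice_const (M:ℂ)).cauchy hz

lemma Pr_re_le {k : ℝ → ℝ} (hk : Integrable k arcM) {M : ℝ} (hM : ∀ θ, k θ ≤ M) {z : ℂ}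
    (hz : z ∈ uDisc) : (Pr k z).re ≤ M := by
  obtain ⟨h1, h2⟩ := Pr_re hk hz
  obtain ⟨h3, h4⟩ := Pr_re (integrable_of_cont (continuous_const (y := M))) hz
  rw [Pr_const hz, Complex.ofReal_re] at h4
  rw [h2, h4]
  apply integral_mono h1 h3
  intro θ
  exact mul_le_mul_of_nonneg_right (hM θ) (by linarith [ker_re hz θ])

lemma Pr_zero (k : ℝ → ℝ) : Pr k 0 = ((∫ θ, k θ ∂arcM : ℝ) : ℂ) := by
  rw [Pr, Pp_zero, integral_complex_ofReal]

lemma Pr_analytic {k : ℝ → ℝ} (hk : Integrable k arcM) : AnalyticOnDisc (Pr k) :=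
  Pp_analytic (hk.ofReal (𝕜 := ℂ))

lemma PN_Pr {k : ℝ → ℝ} (hk : Integrable k arcM) (hk0 : ∀ θ, 0 ≤ k θ) {r : ℝ}
    (hr : r ∈ Set.Ioo (0:ℝ) 1) : PN (fun z => Pr k (r * z)) (∫ θ, k θ ∂arcM) where
  pos := integral_nonneg hk0
  zero := by rw [mul_zero, Pr_zero]
  ex := by
    have key : ∀ z ∈ ball (0:ℂ) r⁻¹, (r:ℂ) * z ∈ uDisc := by
      intro z hz
      simp only [uDisc, mem_ball_zero_iff] at *
      rw [norm_mul, Complex.norm_real, Real.norm_of_nonneg hr.1.le]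
      calc r * ‖z‖ < r * r⁻¹ := mul_lt_mul_of_pos_left hz hr.1
        _ = 1 := mul_inv_cancel₀ hr.1.ne'
    refine ⟨r⁻¹, (one_lt_inv₀ hr.1).2 hr.2, ?_, fun z hz => Pr_re_ge hk hk0 (key z hz)⟩
    exact DifferentiableOn.comp (t := uDisc) (Pr_analytic hk) (by fun_prop) key

lemma PN.Qb {F : ℂ → ℂ} {c : ℝ} (h : PN F c) : Qb F c := by
  have i2 : Integrable (fun θ => (starRingEnd ℂ) (F (bpt θ) - c)) arcM :=
    integrable_of_cont (Complex.continuous_conj.comp (h.nice.sub (nice_const c)).continuous)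
  refine ⟨_, h.nice.integrable.add i2, ?_, fun z hz => ?_⟩
  · have e : ∀ θ, ‖F (bpt θ) + (starRingEnd ℂ) (F (bpt θ) - c)‖ = 2 * (F (bpt θ)).re - c := by
      intro θ
      have : F (bpt θ) + (starRingEnd ℂ) (F (bpt θ) - c) = ((2 * (F (bpt θ)).re - c : ℝ) : ℂ) := by
        rw [map_sub, Complex.conj_ofReal, ← add_sub_assoc, Complex.add_conj]; push_cast; ring
      rw [this, Complex.norm_real, Real.norm_of_nonneg]
      linarith [h.re_ge (norm_bpt θ).le]
    simp only [Pi.add_apply, e]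
    rw [integral_sub ((integrable_of_cont h.cont_re).const_mul 2) (integrable_const _),
      integral_const_mul, h.mean_re]
    simp
    linarith
  · have := Pp_add h.nice.integrable i2 hz
    rw [h.nice.cauchy hz, (h.nice.sub (nice_const c)).cauchy_conj hz, h.zero] at this
    simp only [sub_self, map_zero, add_zero] at this
    exact this.symm

/-- the four unimodular coefficients -/
def cf : Fin 4 → ℂ := ![1, -1, Complex.I, -Complex.I]

lemma norm_cf (i : Fin 4) : ‖cf i‖ = 1 := by
  fin_cases i <;> simp [cf]

lemma decomp {h : ℝ → ℂ} (hh : Integrable h arcM) : ∃ k : Fin 4 → ℝ → ℝ,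
    (∀ i, Integrable (k i) arcM) ∧ (∀ i θ, 0 ≤ k i θ) ∧
    (∀ i, ∫ θ, k i θ ∂arcM ≤ ∫ θ, ‖h θ‖ ∂arcM) ∧
    ∀ z ∈ uDisc, Pp h z = ∑ i, cf i * Pr (k i) z := by
  have hre : Integrable (fun θ => (h θ).re) arcM := hh.re
  have him : Integrable (fun θ => (h θ).im) arcM := hh.im
  set k : Fin 4 → ℝ → ℝ := ![fun θ => max (h θ).re 0, fun θ => max (-(h θ).re) 0,
    fun θ => max (h θ).im 0, fun θ => max (-(h θ).im) 0] with hk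
  have ki : ∀ i, Integrable (k i) arcM := by
    intro i
    fin_cases i
    · exact hre.pos_part
    · exact hre.neg_part
    · exact him.pos_part
    · exact him.neg_part
  have kle : ∀ i θ, k i θ ≤ ‖h θ‖ := by
    intro i θ
    have h1 := abs_le.1 (Complex.abs_re_le_norm (h θ))
    have h2 := abs_le.1 (Complex.abs_im_le_norm (h θ))
    have h3 := norm_nonneg (h θ)
    fin_cases i <;> simp [hk] <;> linarith
  refine ⟨k, ki, ?_, fun i => integral_mono (ki i) hh.norm (kle i), fun z hz => ?_⟩
  · intro i θ
    fin_cases i <;> simp [hk]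
  · have e : h = fun θ => ∑ i, cf i * (k i θ : ℂ) := by
      ext θ
      have a1 : ((max (h θ).re 0 : ℝ) : ℂ) - ((max (-(h θ).re) 0 : ℝ) : ℂ) = (h θ).re := by
        rw [← Complex.ofReal_sub, max_zero_sub_max_neg_zero_eq_self]
      have a2 : ((max (h θ).im 0 : ℝ) : ℂ) - ((max (-(h θ).im) 0 : ℝ) : ℂ) = (h θ).im := by
        rw [← Complex.ofReal_sub, max_zero_sub_max_neg_zero_eq_self]
      rw [Fin.sum_univ_four]
      simp only [cf, hk, Matrix.cons_val]
      conv_lhs => rw [← Complex.re_add_im (h θ)]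
      linear_combination (-1:ℂ) * a1 - Complex.I * a2
    conv_lhs => rw [e]
    simp only [Pp, Finset.sum_div]
    have ic : ∀ i, Integrable (fun θ => cf i * ((k i θ : ℝ) : ℂ)) arcM :=
      fun i => ((ki i).ofReal (𝕜 := ℂ)).const_mul (cf i)
    rw [integral_finsetSum _ fun i _ => integrable_ker (ic i) hz]
    apply Finset.sum_congr rfl
    intro i _
    exact Pp_smul _ _ _

lemma Qb_dil {h : ℝ → ℂ} (hh : Integrable h arcM) {r : ℝ} (hr : r ∈ Set.Ioo (0:ℝ) 1) :
    Qb (fun z => Pp h (r * z)) (4 * ∫ θ, ‖h θ‖ ∂arcM) := by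
  obtain ⟨k, h1, h2, h3, h4⟩ := decomp hh
  have := Qb.sum (Finset.univ : Finset (Fin 4)) (f := fun i z => cf i * Pr (k i) (r * z))
    (c := fun i => ‖cf i‖ * ∫ θ, k i θ ∂arcM)
    (fun i _ => (PN_Pr (h1 i) (h2 i) hr).Qb.smul (cf i))
  refine Qb.congr (this.mono ?_) ?_
  · simp only [norm_cf, one_mul]
    calc _ ≤ ∑ i : Fin 4, ∫ θ, ‖h θ‖ ∂arcM := Finset.sum_le_sum fun i _ => h3 i
      _ = _ := by simp
  · intro z hz
    apply h4
    simp only [uDisc, mem_ball_zero_iff] at *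
    rw [norm_mul, Complex.norm_real, Real.norm_of_nonneg hr.1.le]
    nlinarith [hr.1, hr.2, norm_nonneg z]

lemma Nice.Qb {F : ℂ → ℂ} (h : Nice F) {C : ℝ} (hC : ∀ z, ‖z‖ ≤ 1 → ‖F z‖ ≤ C) : Qb F C := by
  refine ⟨_, h.integrable, ?_, fun z hz => (h.cauchy hz).symm⟩
  calc _ ≤ ∫ θ, C ∂arcM := integral_mono h.integrable.norm (integrable_const _)
        fun θ => hC _ (norm_bpt θ).le
    _ = C := by simp

section density

instance fact_two_pi : Fact (0 < 2 * Real.pi) := ⟨Real.two_pi_pos⟩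

/-- projection to the additive circle -/
def mkc (θ : ℝ) : AddCircle (2 * Real.pi) := (θ : AddCircle (2 * Real.pi))

lemma continuous_mkc : Continuous mkc := AddCircle.continuous_mk' _

lemma exists_lift {h : ℝ → ℂ} (hh : Integrable h arcM) :
    ∃ H : AddCircle (2 * Real.pi) → ℂ, Measurable H ∧ ∀ᵐ θ ∂arcM, H (mkc θ) = h θ := by
  obtain ⟨h', h1, h2⟩ := hh.aestronglyMeasurable
  refine ⟨AddCircle.liftIoc (2 * Real.pi) 0 h', ?_, ?_⟩
  · have : AddCircle.liftIoc (2 * Real.pi) 0 h' =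
        (fun x : Ioc 0 (0 + 2 * Real.pi) => h' x) ∘ (AddCircle.measurableEquivIoc (2 * Real.pi) 0) :=
      rfl
    rw [this]
    exact (h1.measurable.comp measurable_subtype_coe).comp (MeasurableEquiv.measurable _)
  · have hm : ∀ᵐ θ ∂arcM, θ ∈ Ioc 0 (2 * Real.pi) := by
      apply Measure.ae_smul_measure
      exact ae_restrict_mem measurableSet_Ioc
    filter_upwards [hm, h2] with θ h3 h4
    rw [h4]
    exact AddCircle.liftIoc_coe_apply (by simpa using h3)

lemma fourier_mkc (n : ℤ) (θ : ℝ) : fourier n (mkc θ) = bpt θ ^ n := by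
  rw [mkc, fourier_coe_apply, bpt, ← Complex.exp_int_mul]
  congr 1
  have : (Real.pi : ℂ) ≠ 0 := by exact_mod_cast Real.pi_ne_zero
  push_cast
  field_simp

lemma Pp_zpow (n : ℤ) : ∃ p : Polynomial ℂ, ∀ z ∈ uDisc, Pp (fun θ => bpt θ ^ n) z = p.eval z := by
  obtain ⟨m, rfl | rfl⟩ := n.eq_nat_or_neg
  · refine ⟨Polynomial.X ^ m, fun z hz => ?_⟩
    have := (nice_poly (Polynomial.X ^ m)).cauchy hz
    simpa using this
  · refine ⟨Polynomial.C ((starRingEnd ℂ) (0 ^ m)), fun z hz => ?_⟩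
    have := (nice_poly (Polynomial.X ^ m)).cauchy_conj hz
    simp only [Polynomial.eval_pow, Polynomial.eval_X] at this
    rw [Polynomial.eval_C, ← this]
    congr 1
    ext θ
    rw [map_pow, conj_bpt, inv_pow, zpow_neg, zpow_natCast]

lemma Pp_span {t : C(AddCircle (2 * Real.pi), ℂ)}
    (ht : t ∈ Submodule.span ℂ (Set.range (@fourier (2 * Real.pi)))) :
    ∃ p : Polynomial ℂ, ∀ z ∈ uDisc, Pp (fun θ => t (mkc θ)) z = p.eval z := by
  have hi : ∀ t : C(AddCircle (2 * Real.pi), ℂ), Integrable (fun θ => t (mkc θ)) arcM :=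
    fun t => integrable_of_cont (t.continuous.comp continuous_mkc)
  induction ht using Submodule.span_induction with
  | mem x hx =>
    obtain ⟨n, rfl⟩ := hx
    simp only [fourier_mkc]
    exact Pp_zpow n
  | zero => exact ⟨0, fun z _ => by simp [Pp]⟩
  | add x y _ _ h1 h2 =>
    obtain ⟨p, hp⟩ := h1
    obtain ⟨q, hq⟩ := h2
    refine ⟨p + q, fun z hz => ?_⟩
    rw [Polynomial.eval_add, ← hp z hz, ← hq z hz]
    exact Pp_add (hi x) (hi y) hz
  | smul a x _ h1 =>
    obtain ⟨p, hp⟩ := h1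
    refine ⟨Polynomial.C a * p, fun z hz => ?_⟩
    rw [Polynomial.eval_mul, Polynomial.eval_C, ← hp z hz]
    exact Pp_smul a _ z

lemma poly_dense {h : ℝ → ℂ} (hh : Integrable h arcM) {η : ℝ} (hη : 0 < η) :
    ∃ p : Polynomial ℂ, ∃ s : ℝ → ℂ, Integrable s arcM ∧ (∫ θ, ‖s θ‖ ∂arcM) ≤ η ∧
      ∀ z ∈ uDisc, Pp h z = p.eval z + Pp s z := by
  obtain ⟨H, hHm, hH⟩ := exists_lift hh
  set μ := Measure.map mkc arcM with hμ
  have hmk : AEMeasurable mkc arcM := continuous_mkc.measurable.aemeasurable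
  have : IsProbabilityMeasure μ := Measure.isProbabilityMeasure_map hmk
  have hHi : Integrable H μ := by
    rw [hμ, integrable_map_measure hHm.aestronglyMeasurable hmk]
    exact hh.congr (hH.mono fun θ h => h.symm)
  obtain ⟨g, hg, hgi⟩ := hHi.exists_boundedContinuous_integral_sub_le (half_pos hη)
  have hgmem : g.toContinuousMap ∈
      (Submodule.span ℂ (Set.range (@fourier (2 * Real.pi)))).topologicalClosure := by
    rw [span_fourier_closure_eq_top]; trivial
  obtain ⟨t, ht, htg⟩ := Metric.mem_closure_iff.1 hgmem (η / 2) (half_pos hη)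
  obtain ⟨p, hp⟩ := Pp_span ht
  have hti : Integrable (fun θ => t (mkc θ)) arcM :=
    integrable_of_cont (t.continuous.comp continuous_mkc)
  have hgi' : Integrable (fun θ => g (mkc θ)) arcM :=
    integrable_of_cont (g.continuous.comp continuous_mkc)
  refine ⟨p, fun θ => h θ - t (mkc θ), hh.sub hti, ?_, fun z hz => ?_⟩
  · have e : ∫ x, ‖H x - g x‖ ∂μ = ∫ θ, ‖h θ - g (mkc θ)‖ ∂arcM := by
      rw [hμ, integral_map hmk]
      · apply integral_congr_ae
        filter_upwards [hH] with θ hθ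
        rw [hθ]
      · exact (hHm.sub g.continuous.measurable).norm.aestronglyMeasurable
    rw [e] at hg
    calc ∫ θ, ‖h θ - t (mkc θ)‖ ∂arcM ≤ ∫ θ, (‖h θ - g (mkc θ)‖ + η / 2) ∂arcM := by
          apply integral_mono (hh.sub hti).norm ((hh.sub hgi').norm.add (integrable_const _))
          intro θ
          have h1 : ‖g (mkc θ) - t (mkc θ)‖ ≤ η / 2 := by
            have := ContinuousMap.dist_apply_le_dist (f := g.toContinuousMap) (g := t) (mkc θ)
            rw [dist_eq_norm] at this
            exact this.trans htg.le
          have h2 := norm_add_le (h θ - g (mkc θ)) (g (mkc θ) - t (mkc θ))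
          rw [sub_add_sub_cancel] at h2
          change ‖h θ - t (mkc θ)‖ ≤ ‖h θ - g (mkc θ)‖ + η / 2
          linarith
      _ = (∫ θ, ‖h θ - g (mkc θ)‖ ∂arcM) + η / 2 := by
          have i1 : Integrable (fun θ => ‖h θ - g (mkc θ)‖) arcM := (hh.sub hgi').norm
          rw [integral_add i1 (integrable_const _)]; simp
      _ ≤ η := by linarith
  · rw [Pp_sub hh hti hz, hp z hz]; ring

lemma poly_dil (p : Polynomial ℂ) {η : ℝ} (hη : 0 < η) :
    ∀ᶠ n in atTop, ∀ z : ℂ, ‖z‖ ≤ 1 → ‖p.eval z - p.eval (rs n * z)‖ ≤ η := by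
  have hu : UniformContinuousOn (fun z => p.eval z) (closedBall (0:ℂ) 1) :=
    (isCompact_closedBall (0:ℂ) 1).uniformContinuousOn_of_continuous p.continuous.continuousOn
  rw [Metric.uniformContinuousOn_iff] at hu
  obtain ⟨δ, hδ, hu⟩ := hu η hη
  have := rs_tendsto'.eventually (Metric.ball_mem_nhds 1 hδ)
  filter_upwards [this] with n hn z hz
  rw [← dist_eq_norm]
  refine (hu z (by simpa using hz) _ ?_ ?_).le
  · have := dil_mem (rs_mem n) hz
    exact ball_subset_closedBall this
  · rw [dist_eq_norm]
    have e : z - rs n * z = ((1 - rs n : ℝ) : ℂ) * z := by push_cast; ring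
    rw [e, norm_mul, Complex.norm_real]
    rw [Real.dist_eq, abs_lt] at hn
    rw [Real.norm_of_nonneg (by linarith [(rs_mem n).2])]
    have := (rs_mem n).2
    nlinarith [hn.1, norm_nonneg z]

lemma dil_approx {h : ℝ → ℂ} (hh : Integrable h arcM) {η : ℝ} (hη : 0 < η) :
    ∀ᶠ n in atTop, Qb (fun z => Pp h z - Pp h (rs n * z)) η := by
  obtain ⟨p, s, hs, hsn, hp⟩ := poly_dense hh (η := η / 10) (by positivity)
  filter_upwards [poly_dil p (half_pos hη)] with n hn
  have q1 : Qb (fun z => p.eval z - p.eval (rs n * z)) (η / 2) := by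
    apply Nice.Qb _ hn
    refine ⟨2, by norm_num, ?_⟩
    have := p.differentiable
    fun_prop
  have q2 : Qb (Pp s) (η / 10) := ⟨s, hs, hsn, fun _ _ => rfl⟩
  have q3 := (Qb_dil hs (rs_mem n)).smul (-1)
  refine ((q1.add (q2.add q3)).mono ?_).congr fun z hz => ?_
  · simp; linarith
  · have hz' : ‖z‖ ≤ 1 := by simpa using ball_subset_closedBall hz
    rw [hp z hz, hp _ (dil_mem (rs_mem n) hz')]
    ring

end density

lemma trunc_small {k : ℝ → ℝ} (hk : Integrable k arcM) (hk0 : ∀ θ, 0 ≤ k θ) {η : ℝ} (hη : 0 < η) :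
    ∃ M : ℝ, 0 ≤ M ∧ Integrable (fun θ => max (k θ - M) 0) arcM ∧
      ∫ θ, max (k θ - M) 0 ∂arcM ≤ η := by
  have hi : ∀ M : ℝ, Integrable (fun θ => max (k θ - M) 0) arcM :=
    fun M => (hk.sub (integrable_const M)).pos_part
  have := tendsto_integral_of_dominated_convergence (μ := arcM)
    (F := fun (n : ℕ) θ => max (k θ - n) 0) (f := fun _ => 0) k
    (fun n => (hi n).aestronglyMeasurable) hk
    (fun n => Eventually.of_forall fun θ => by
      have h1 := hk0 θ
      have h2 : (0:ℝ) ≤ n := Nat.cast_nonneg n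
      rw [Real.norm_of_nonneg (le_max_right _ _)]
      exact max_le (by linarith) h1)
    (Eventually.of_forall fun θ => by
      apply tendsto_const_nhds.congr'
      filter_upwards [eventually_ge_atTop ⌈k θ⌉₊] with n hn
      have : k θ ≤ n := (Nat.le_ceil _).trans (by exact_mod_cast hn)
      rw [max_eq_right (by linarith)])
  simp only [integral_zero] at this
  obtain ⟨n, hn⟩ := (this.eventually (gt_mem_nhds hη)).exists
  exact ⟨n, Nat.cast_nonneg n, hi n, hn.le⟩

lemma Pr_split {k : ℝ → ℝ} (hk : Integrable k arcM) (M : ℝ) {z : ℂ} (hz : z ∈ uDisc)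
    (hi : Integrable (fun θ => max (k θ - M) 0) arcM) :
    (Pr k z).re ≤ M + (Pr (fun θ => max (k θ - M) 0) z).re := by
  obtain ⟨h1, h2⟩ := Pr_re hk hz
  obtain ⟨h3, h4⟩ := Pr_re hi hz
  obtain ⟨h5, h6⟩ := Pr_re (integrable_of_cont (continuous_const (y := M))) hz
  rw [Pr_const hz, Complex.ofReal_re] at h6
  have h9 : M + (Pr (fun θ => max (k θ - M) 0) z).re =
      ∫ θ, (M * ((1 - (starRingEnd ℂ) (bpt θ) * z)⁻¹).re +
        max (k θ - M) 0 * ((1 - (starRingEnd ℂ) (bpt θ) * z)⁻¹).re) ∂arcM := by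
    rw [integral_add h5 h3, ← h6, h4]
  rw [h2, h9]
  apply integral_mono h1 (h5.add h3)
  intro θ
  have h7 := ker_re hz θ
  have h8 := le_max_left (k θ - M) 0
  change k θ * _ ≤ M * _ + max (k θ - M) 0 * _
  nlinarith

lemma SS_small {k l : ℝ → ℝ} (hk : Integrable k arcM) (hk0 : ∀ θ, 0 ≤ k θ)
    (hl : Integrable l arcM) (hl0 : ∀ θ, 0 ≤ l θ) {η : ℝ} (hη : 0 < η) :
    ∃ ε₀ : ℝ, 0 < ε₀ ∧ ∀ ε, 0 < ε → ε ≤ ε₀ → ∀ r ∈ Set.Ioo (0:ℝ) 1,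
      SS ε (fun z => Pr k (r * z)) (fun z => Pr l (r * z)) ≤ η := by
  obtain ⟨M, hM, hi, hc⟩ := trunc_small hk hk0 (η := η / 8) (by positivity)
  set cl := ∫ θ, l θ ∂arcM with hcl
  have hcl0 : 0 ≤ cl := integral_nonneg hl0
  set δ := η / (8 * (M + 1)) with hδ
  have hδ0 : 0 < δ := by positivity
  have hMδ : 8 * M * δ ≤ η := by
    rw [hδ, mul_div_assoc', div_le_iff₀ (by positivity)]
    nlinarith
  refine ⟨δ ^ 2 / (cl + 1), by positivity, fun ε hε hε' r hr => ?_⟩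
  have hεc : ε * cl ≤ δ ^ 2 := by
    rw [le_div_iff₀ (by positivity)] at hε'
    nlinarith
  have pk := PN_Pr hk hk0 hr
  have pl := PN_Pr hl hl0 hr
  have p2 := PN_Pr hi (fun θ => le_max_right _ _) hr
  set F := fun z => Pr k (r * z) with hF
  set G := fun z => Pr l (r * z) with hG
  set F2 := fun z => Pr (fun θ => max (k θ - M) 0) (r * z) with hF2
  have isq : Integrable (fun θ => ε * ‖G (bpt θ) * (1 + ε * G (bpt θ))⁻¹‖ ^ 2) arcM :=
    integrable_of_cont (continuous_const.mul ((pl.cont_x hε).pow 2))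
  have i1 : Integrable (fun θ => 2 * M * ε / δ * (ε * ‖G (bpt θ) * (1 + ε * G (bpt θ))⁻¹‖ ^ 2)) arcM :=
    isq.const_mul _
  have i2 : Integrable (fun θ => 4 * (F2 (bpt θ)).re) arcM :=
    (integrable_of_cont p2.cont_re).const_mul 4
  have i3 : Integrable (fun θ => 2 * M * ε / δ * (ε * ‖G (bpt θ) * (1 + ε * G (bpt θ))⁻¹‖ ^ 2) +
      4 * (F2 (bpt θ)).re) arcM := i1.add i2
  have main : SS ε F G ≤ ∫ θ, (2 * M * ε / δ * (ε * ‖G (bpt θ) * (1 + ε * G (bpt θ))⁻¹‖ ^ 2) +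
      4 * (F2 (bpt θ)).re + 2 * M * δ) ∂arcM := by
    apply integral_mono (integrable_of_cont ((continuous_const.mul pk.cont_re).mul (pl.cont_1u hε)))
      (i3.add (integrable_const _))
    intro θ
    change 2 * (F (bpt θ)).re * ‖1 - (1 + ε * G (bpt θ))⁻¹‖ ≤
      2 * M * ε / δ * (ε * ‖G (bpt θ) * (1 + ε * G (bpt θ))⁻¹‖ ^ 2) +
      4 * (F2 (bpt θ)).re + 2 * M * δ
    have a1 : (F (bpt θ)).re ≤ M + (F2 (bpt θ)).re := Pr_split hk M (dil_bpt_mem hr θ) hi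
    have a2 := p2.re_b θ
    have a3 := pw_norm_one_sub_le (pl.re_b θ) hε
    have a4 := pw_norm_one_sub (pl.re_b θ) hε
    set d := ‖1 - (1 + ε * G (bpt θ))⁻¹‖ with hd
    set x := ‖G (bpt θ) * (1 + ε * G (bpt θ))⁻¹‖ with hx
    have hd0 : 0 ≤ d := norm_nonneg _
    have a5 : d ≤ δ + d ^ 2 / δ := by
      have : d * δ ≤ δ ^ 2 + d ^ 2 := by nlinarith [sq_nonneg (d - δ), mul_nonneg hd0 hδ0.le]
      have e : δ + d ^ 2 / δ = (δ ^ 2 + d ^ 2) / δ := by field_simp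
      rw [e, le_div_iff₀ hδ0]; exact this
    have a6 : d ^ 2 / δ = ε / δ * (ε * x ^ 2) := by rw [a4]; ring
    rw [a6] at a5
    have a7 := mul_le_mul_of_nonneg_left a5 (show 0 ≤ 2 * M by positivity)
    have a8 := mul_le_mul_of_nonneg_right a1 hd0
    have a9 := mul_le_mul_of_nonneg_left a3 a2
    have e2 : 2 * M * ε / δ * (ε * x ^ 2) = 2 * M * (ε / δ * (ε * x ^ 2)) := by ring
    rw [e2]
    nlinarith
  refine main.trans ?_
  rw [integral_add i3 (integrable_const _), integral_add i1 i2,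
    integral_const_mul (2 * M * ε / δ), integral_const_mul 4, p2.mean_re]
  have b1 := pl.int_sq_le hε
  have b2 := mul_le_mul_of_nonneg_left b1 (show 0 ≤ 2 * M * ε / δ by positivity)
  have b3 : 2 * M * ε / δ * cl ≤ 2 * M * δ := by
    rw [div_mul_eq_mul_div, div_le_iff₀ hδ0]
    nlinarith
  simp only [integral_const, probReal_univ, one_smul]
  rw [← hcl] at b2
  linarith

lemma SS_small_all {ι : Type*} [Fintype ι] {K : ι → ℝ → ℝ} (hK : ∀ i, Integrable (K i) arcM)
    (hK0 : ∀ i θ, 0 ≤ K i θ) {η : ℝ} (hη : 0 < η) :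
    ∃ ε : ℝ, 0 < ε ∧ ∀ i j, ∀ r ∈ Set.Ioo (0:ℝ) 1,
      SS ε (fun z => Pr (K i) (r * z)) (fun z => Pr (K j) (r * z)) ≤ η := by
  have : ∀ᶠ ε in 𝓝[>] (0:ℝ), ∀ i j, ∀ r ∈ Set.Ioo (0:ℝ) 1,
      SS ε (fun z => Pr (K i) (r * z)) (fun z => Pr (K j) (r * z)) ≤ η := by
    rw [eventually_all]
    intro i
    rw [eventually_all]
    intro j
    obtain ⟨ε₀, h1, h2⟩ := SS_small (hK i) (hK0 i) (hK j) (hK0 j) hη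
    filter_upwards [Ioc_mem_nhdsGT h1] with ε hε
    exact h2 ε hε.1 hε.2
  obtain ⟨ε, h1, h2⟩ := (this.and self_mem_nhdsWithin).exists
  exact ⟨ε, h2, h1⟩

lemma dir_sub {ϑ : ℂ → ℂ} {Θ : ℝ → ℂ} (h1 : MemHinf ϑ) (h2 : BoundaryFn ϑ Θ)
    (h3 : ∀ᵐ θ ∂arcM, ‖Θ θ‖ = 1) {f g : ℂ → ℂ} (hf : MemKa f) (hg : MemKa g)
    (hfg : ∀ z ∈ uDisc, f z = ϑ z * g z) {ε' : ℝ} (hε' : 0 < ε') :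
    ∃ q : Polynomial ℂ, kaNorm (fun z => f z - ϑ z * q.eval z) < ε' := by
  obtain ⟨F, hF, hfF⟩ := hf
  obtain ⟨G, hG, hgG⟩ := hg
  replace hfF : ∀ z ∈ uDisc, f z = Pp F z := hfF
  replace hgG : ∀ z ∈ uDisc, g z = Pp G z := hgG
  obtain ⟨kf, kf1, kf2, -, kf4⟩ := decomp hF
  obtain ⟨kg, kg1, kg2, -, kg4⟩ := decomp hG
  set K : Fin 4 ⊕ Fin 4 → ℝ → ℝ := Sum.elim kf kg with hKdef
  have hK : ∀ i, Integrable (K i) arcM := by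
    rintro (i | i)
    · exact kf1 i
    · exact kg1 i
  have hK0 : ∀ i θ, 0 ≤ K i θ := by
    rintro (i | i)
    · exact kf2 i
    · exact kg2 i
  set η := ε' / 5 with hη
  have hη0 : 0 < η := by positivity
  obtain ⟨ε, hε, hSS⟩ := SS_small_all hK hK0 (η := η / 160) (by positivity)
  set C : ℝ := 4 * (2 / ε) with hC
  have hC0 : 0 < C := by positivity
  have ev1 : ∀ᶠ n in atTop, (∫ θ, ‖ϑ ((rs n : ℂ) * bpt θ) - Θ θ‖ ∂arcM) < η / C :=
    (bdry_L1 h1 h2 h3).eventually (gt_mem_nhds (by positivity))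
  obtain ⟨n, hn1, hn2⟩ := (ev1.and (dil_approx hF hη0)).exists
  have hr := rs_mem n
  set r := rs n with hrdef
  have hPN : ∀ i, PN (fun z => Pr (K i) (r * z)) (∫ θ, K i θ ∂arcM) :=
    fun i => PN_Pr (hK i) (hK0 i) hr
  set U : ℂ → ℂ := fun z => ∏ i, (1 + ε * Pr (K i) (r * z))⁻¹ with hU
  have hUn : Nice U := Nice.prod _ fun i _ => (hPN i).inv_nice hε
  set b : ℂ → ℂ := fun z => Pp G (r * z) * U z with hb
  have hbn : Nice b := (nice_dil (Pp_analytic hG) hr).mul hUn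
  have hbC : ∀ z, ‖z‖ ≤ 1 → ‖b z‖ ≤ C := by
    intro z hz
    have e : b z = ∑ i, cf i * (Pr (kg i) (r * z) * U z) := by
      simp only [hb, kg4 _ (dil_mem hr hz), Finset.sum_mul, mul_assoc]
    rw [e]
    refine (norm_sum_le _ _).trans ?_
    calc _ ≤ ∑ i : Fin 4, 2 / ε := by
          apply Finset.sum_le_sum
          intro i _
          rw [norm_mul, norm_cf, one_mul]
          simp only [hU]
          rw [← Finset.mul_prod_erase _ _ (Finset.mem_univ (Sum.inr i : Fin 4 ⊕ Fin 4)), ← mul_assoc,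
            norm_mul]
          have a1 := pw_bound ((hPN (Sum.inr i)).re_nonneg hz) hε
          have a2 := prod_norm_le_one (Finset.univ.erase (Sum.inr i : Fin 4 ⊕ Fin 4))
            (v := fun l => (1 + ε * Pr (K l) (r * z))⁻¹)
            (fun l _ => pw_norm ((hPN l).re_nonneg hz) hε)
          calc _ ≤ 2 / ε * 1 := mul_le_mul a1 a2 (norm_nonneg _) (by positivity)
            _ = _ := mul_one _
      _ = C := by simp [hC]
  obtain ⟨q, hq⟩ := hbn.approx hη0
  refine ⟨q, ?_⟩
  have q1 : Qb (fun z => Pp F (r * z) * (1 - U z)) η := by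
    have s := Qb.sum (Finset.univ : Finset (Fin 4)) fun i _ =>
      (PN.key hPN hε (Sum.inl i : Fin 4 ⊕ Fin 4)).smul (cf i)
    refine (s.mono ?_).congr fun z hz => ?_
    · calc _ ≤ ∑ i : Fin 4, ∑ l : Fin 4 ⊕ Fin 4, 5 * (η / 160) := by
            apply Finset.sum_le_sum
            intro i _
            rw [norm_cf, one_mul]
            apply Finset.sum_le_sum
            intro l _
            have b1 := hSS (Sum.inl i) l r hr
            have b2 := hSS (Sum.inl i) (Sum.inl i) r hr
            have b3 := hSS l l r hr
            linarith
        _ = η := by simp; ring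
    · have hz' : ‖z‖ ≤ 1 := by simpa using ball_subset_closedBall hz
      rw [kf4 _ (dil_mem hr hz'), Finset.sum_mul]
      apply Finset.sum_congr rfl
      intro i _
      rw [mul_assoc]
      rfl
  have q2 := Qb_dil_sub h1 h2 h3 hbn hbC n
  have q3 := Qb_inner_mul h1 h2 h3 (hbn.sub (nice_poly q)) (fun z hz => (hq z hz).le)
  have hCn : C * ∫ θ, ‖ϑ ((r : ℂ) * bpt θ) - Θ θ‖ ∂arcM ≤ η := by
    rw [lt_div_iff₀ hC0] at hn1
    linarith
  have tot := ((hn2.add q1).add ((q2.mono hCn).add q3)).congr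
    (g := fun z => f z - ϑ z * q.eval z) (fun z hz => by
      have hz' : ‖z‖ ≤ 1 := by simpa using ball_subset_closedBall hz
      have hrz := dil_mem hr hz'
      have e1 : Pp F (r * z) = ϑ (r * z) * Pp G (r * z) := by
        rw [← hfF _ hrz, ← hgG _ hrz, hfg _ hrz]
      rw [hfF z hz]
      simp only [hb]
      rw [e1]
      ring)
  refine lt_of_le_of_lt tot.kaNorm_le ?_
  rw [hη]
  linarith

/-- for an inner function `ϑ`, the set
`ϑ(𝒦_a) = {f ∈ 𝒦_a : f/ϑ ∈ 𝒦_a}` equals the norm closure in `𝒦_a` of the analytic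
polynomial multiples of `ϑ`. -/
theorem theta_Ka_eq_closure_poly_multiples (ϑ : ℂ → ℂ) (hϑ : IsInner ϑ) :
    {f : ℂ → ℂ | MemKa f ∧ ∃ g : ℂ → ℂ, MemKa g ∧ ∀ z ∈ uDisc, f z = ϑ z * g z} =
      {f : ℂ → ℂ | MemKa f ∧ ∀ ε > (0 : ℝ), ∃ q : Polynomial ℂ,
        kaNorm (fun z => f z - ϑ z * q.eval z) < ε} := by
  obtain ⟨h1, Θ, h2, h3⟩ := hϑ
  ext f
  constructor
  · rintro ⟨hf, g, hg, hfg⟩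
    exact ⟨hf, fun ε hε => dir_sub h1 h2 h3 hf hg hfg hε⟩
  · rintro ⟨hf, hcl⟩
    exact ⟨hf, dir_sup h1 h2 h3 hf hcl⟩
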